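/- arXiv:math/0010250 — 2 statements merged into one kernel-verified Lean document; each statement's English description precedes it below -/
import Mathlib

section
/- In Cl_{2n}(q,c) the element z_0 = ∑_{k=0}^n (-1)^k (∏_{l=1}^k (q^{2l-2}+q^{-2l+2})/(q(q+q^{-1})c²)) ∑_{J: ℓ(J)=k} q^{2L(J)-k(2n-k+1)} γ_1^{j_1}⋯γ_n^{j_n}γ_{n+1}^{j_n}⋯γ_{2n}^{j_1} satisfies z_0 γ_i = -γ_i z_0 for all i = 1,…,2n, and z_0² = 1. Here J = (j_1,…,j_n) ranges over {0,1}^n, ℓ(J) = ∑ j_k, L(J) = ∑ k·j_k. -/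
noncomputable section

namespace FRT

/-- The "dual" index `i' = N+1-i` (0-indexed: `N-1-i`). -/
def dual {N : ℕ} (i : Fin N) : Fin N := ⟨N - 1 - i.val, by have := i.2; omega⟩

/-- Generators of the free algebra. -/
def gen {N : ℕ} (i : Fin N) : FreeAlgebra ℂ (Fin N) := FreeAlgebra.ι ℂ i

/-- The sum `∑_{k<i} q^{2k-2i+2} γ_k γ_{k'}` appearing in the defining relations. -/
def pairSum (N : ℕ) (q : ℂ) (i : Fin N) : FreeAlgebra ℂ (Fin N) :=
  ∑ k ∈ Finset.Iio i, (q ^ (2 * (k.val : ℤ) - 2 * (i.val : ℤ) + 2)) • (gen k * gen (dual k))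

/-- The defining relations of the FRT–Clifford algebra `Cl_N(q,c)`. -/
inductive Rel (N : ℕ) (q c : ℂ) : FreeAlgebra ℂ (Fin N) → FreeAlgebra ℂ (Fin N) → Prop
  | sq (i : Fin N) (h : 2 * i.val + 1 ≠ N) : Rel N q c (gen i * gen i) 0
  | swap (i j : Fin N) (hlt : i < j) (h : i.val + j.val + 1 ≠ N) :
      Rel N q c (gen j * gen i) ((-(q ^ 2)) • (gen i * gen j))
  | pair (i : Fin N) (h : 2 * i.val + 1 < N) :
      Rel N q c (gen (dual i) * gen i)
        (-(gen i * gen (dual i)) + (q ^ 2 - q⁻¹ ^ 2) • pairSum N q i +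
          algebraMap ℂ _ (c ^ 2 * q ^ ((N : ℤ) - 2 * (i.val : ℤ) - 1) * (q + q⁻¹)))
  | middle (i : Fin N) (h : 2 * i.val + 1 = N) :
      Rel N q c (gen i * gen i) ((q - q⁻¹) • pairSum N q i + algebraMap ℂ _ (c ^ 2))

/-- The FRT–Clifford algebra `Cl_N(q,c)`. -/
abbrev Cl (N : ℕ) (q c : ℂ) := RingQuot (Rel N q c)

/-- The generators `γ_i` of `Cl_N(q,c)`. -/
def γ (N : ℕ) (q c : ℂ) (i : Fin N) : Cl N q c :=
  RingQuot.mkAlgHom ℂ (Rel N q c) (gen i)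

/-- Ordered product `γ_1 γ_2 ⋯ γ_m` of the first `m` generators. -/
def prodFirst (N : ℕ) (q c : ℂ) (m : ℕ) : Cl N q c :=
  (((List.finRange N).take m).map (γ N q c)).prod

/-- Ordered product `γ_{m+1} γ_{m+2} ⋯ γ_N` (0-indexed: indices `m,…,N-1`). -/
def prodFrom (N : ℕ) (q c : ℂ) (m : ℕ) : Cl N q c :=
  (((List.finRange N).drop m).map (γ N q c)).prod

/-- The ordered monomial `γ_1^{i_1} ⋯ γ_N^{i_N}` for `i ∈ {0,1}^N`. -/
def monoB (N : ℕ) (q c : ℂ) (f : Fin N → Bool) : Cl N q c :=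
  ((List.finRange N).map (fun i => if f i then γ N q c i else 1)).prod

/-- The ordered monomial `γ_1^{i_1} ⋯ γ_n^{i_n}` for `i ∈ {0,1}^n`, `n ≤ N`. -/
def monoLow (N : ℕ) (q c : ℂ) {n : ℕ} (h : n ≤ N) (f : Fin n → Bool) : Cl N q c :=
  ((List.finRange n).map (fun j => if f j then γ N q c (Fin.castLE h j) else 1)).prod

/-- `z` is homogeneous of `∂_i`-degree `0`: it is fixed by every algebra endomorphism
rescaling `γ_i` by `t` and `γ_{i'}` by `t⁻¹`. -/
def DegZeroAt (N : ℕ) (q c : ℂ) (i : ℕ) (z : Cl N q c) : Prop :=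
  ∀ t : ℂ, t ≠ 0 → ∀ f : Cl N q c →ₐ[ℂ] Cl N q c,
    (∀ j : Fin N, f (γ N q c j) =
      (if j.val = i then t else if j.val + i + 1 = N then t⁻¹ else 1) • γ N q c j) →
    f z = z

/-- For `m : Fin 2n`, the index `k ∈ Fin n` with `m ∈ {k, k'}`. -/
def lowEven (n : ℕ) (m : Fin (2 * n)) : Fin n :=
  ⟨min m.val (2 * n - 1 - m.val), by have := m.2; omega⟩

/-- `ℓ(J) = ∑ j_k`. -/
def ellJ (n : ℕ) (J : Fin n → Bool) : ℕ :=
  (Finset.univ.filter (fun l => J l = true)).card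

/-- `L(J) = ∑ k·j_k` (1-indexed `k`). -/
def LJ (n : ℕ) (J : Fin n → Bool) : ℕ :=
  ∑ l : Fin n, if J l then l.val + 1 else 0

/-- The monomial `γ_1^{j_1}⋯γ_n^{j_n}γ_{n+1}^{j_n}⋯γ_{2n}^{j_1}`. -/
def monoPair (n : ℕ) (q c : ℂ) (J : Fin n → Bool) : Cl (2 * n) q c :=
  ((List.finRange (2 * n)).map
    (fun m => if J (lowEven n m) then γ (2 * n) q c m else 1)).prod

/-- The element `z_0` of `Cl_{2n}(q,c)`. -/
def zZero (n : ℕ) (q c : ℂ) : Cl (2 * n) q c :=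
  ∑ J : Fin n → Bool,
    ((-1 : ℂ) ^ (ellJ n J) *
      (∏ l ∈ Finset.range (ellJ n J),
        ((q ^ (2 * (l : ℤ)) + q ^ (-(2 * (l : ℤ)))) / (q * (q + q⁻¹) * c ^ 2))) *
      q ^ (2 * (LJ n J : ℤ) - (ellJ n J : ℤ) * (2 * (n : ℤ) - (ellJ n J : ℤ) + 1))) •
    monoPair n q c J

open Polynomial in
/-- The polynomial `∏_{l<k} (X - p^l)`. -/
def geomRootPoly (p : ℂ) (k : ℕ) : ℂ[X] := ∏ l ∈ Finset.range k, (X - C (p ^ l))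

/-- The coefficients of `signPoly` in the basis `geomRootPoly`. -/
def signCoeff (p : ℂ) (k : ℕ) : ℂ :=
  (-1) ^ k * ∏ l ∈ Finset.range k, (1 + (p ^ l)⁻¹) / (p ^ (l + 1) - 1)

open Polynomial in
/-- The interpolation polynomial with value `(-1)^m` at `p^m` for `m ≤ n`. -/
def signPoly (p : ℂ) (n : ℕ) : ℂ[X] :=
  ∑ k ∈ Finset.range (n + 1), C (signCoeff p k) * geomRootPoly p k

section Polynomials

open Polynomial

variable {p : ℂ}

lemma geomRootPoly_succ (k : ℕ) :
    geomRootPoly p (k + 1) = geomRootPoly p k * (X - C (p ^ k)) := by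
  simp [geomRootPoly, Finset.prod_range_succ]

lemma geomRootPoly_succ_comp (k : ℕ) :
    (geomRootPoly p (k + 1)).comp (C p * X) =
      C (p ^ k) * (C p * X - 1) * geomRootPoly p k := by
  induction k with
  | zero => simp [geomRootPoly]
  | succ k ih =>
    rw [geomRootPoly_succ, Polynomial.mul_comp, ih, geomRootPoly_succ]
    simp only [Polynomial.sub_comp, Polynomial.X_comp, Polynomial.C_comp]
    simp only [map_pow]
    ring

lemma signCoeff_succ (hp : p ≠ 0) (hp1 : ∀ m : ℕ, 0 < m → p ^ m ≠ 1) (k : ℕ) :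
    signCoeff p (k + 1) * (p ^ k * (p ^ (k + 1) - 1)) = -(signCoeff p k * (p ^ k + 1)) := by
  have h := sub_ne_zero.2 (hp1 (k + 1) k.succ_pos)
  rw [signCoeff, signCoeff, Finset.prod_range_succ, pow_succ (-1 : ℂ) k]
  field_simp

lemma signPoly_comp_add (hp : p ≠ 0) (hp1 : ∀ m : ℕ, 0 < m → p ^ m ≠ 1) (n : ℕ) :
    (signPoly p n).comp (C p * X) + signPoly p n =
      C (signCoeff p n * (p ^ n + 1)) * geomRootPoly p n := by
  induction n with
  | zero => simp [signPoly, signCoeff, geomRootPoly]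
  | succ n ih =>
    have hs : signPoly p (n + 1) =
        signPoly p n + C (signCoeff p (n + 1)) * geomRootPoly p (n + 1) := by
      simp [signPoly, Finset.sum_range_succ]
    have hc := congrArg (C : ℂ → ℂ[X]) (signCoeff_succ hp hp1 n)
    rw [hs, Polynomial.add_comp, Polynomial.mul_comp, Polynomial.C_comp, geomRootPoly_succ_comp,
      geomRootPoly_succ]
    simp only [map_mul, map_add, map_neg, map_sub, map_pow, map_one] at hc ih ⊢
    linear_combination ih + geomRootPoly p n * hc

lemma eval_geomRootPoly_pow {m n : ℕ} (h : m < n) : (geomRootPoly p n).eval (p ^ m) = 0 := by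
  rw [geomRootPoly, Polynomial.eval_prod]
  exact Finset.prod_eq_zero (Finset.mem_range.2 h) (by simp)

lemma eval_signPoly_pow (hp : p ≠ 0) (hp1 : ∀ m : ℕ, 0 < m → p ^ m ≠ 1) {m n : ℕ} (h : m ≤ n) :
    (signPoly p n).eval (p ^ m) = (-1) ^ m := by
  induction m with
  | zero =>
    rw [signPoly, Polynomial.eval_finsetSum, Finset.sum_range_succ']
    have : ∀ k : ℕ, (geomRootPoly p (k + 1)).eval (p ^ 0) = 0 := fun k =>
      eval_geomRootPoly_pow k.succ_pos
    simp only [Polynomial.eval_mul, this, mul_zero, Finset.sum_const_zero]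
    simp [signCoeff, geomRootPoly]
  | succ m ih =>
    have := congrArg (Polynomial.eval (p ^ m)) (signPoly_comp_add hp hp1 n)
    simp only [Polynomial.eval_add, Polynomial.eval_comp, Polynomial.eval_mul, Polynomial.eval_C,
      Polynomial.eval_X, eval_geomRootPoly_pow (Nat.lt_of_succ_le h), ih (by omega)] at this
    rw [pow_succ' p, pow_succ (-1 : ℂ)]
    linear_combination this

lemma geomRootPoly_dvd_signPoly_sq (hp : p ≠ 0) (hp1 : ∀ m : ℕ, 0 < m → p ^ m ≠ 1) (n : ℕ) :
    geomRootPoly p (n + 1) ∣ signPoly p n * signPoly p n - 1 := by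
  have hinj : ∀ i j : ℕ, i < j → p ^ i ≠ p ^ j := fun i j hij h => by
    refine hp1 (j - i) (by omega) ?_
    have : p ^ j = p ^ i * p ^ (j - i) := by rw [← pow_add]; congr 1; omega
    rw [this] at h
    exact (mul_right_eq_self₀.1 h.symm).resolve_right (pow_ne_zero _ hp)
  have hi : Function.Injective fun l : ℕ => p ^ l := fun i j h => by
    by_contra hne
    rcases lt_or_gt_of_ne hne with h1 | h1
    · exact hinj _ _ h1 h
    · exact hinj _ _ h1 h.symm
  refine Finset.prod_dvd_of_coprime
    (fun i _ j _ hij => Polynomial.pairwise_coprime_X_sub_C hi hij) fun i hi => ?_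
  rw [Polynomial.dvd_iff_isRoot]
  simp only [Polynomial.IsRoot, Polynomial.eval_sub, Polynomial.eval_mul, Polynomial.eval_one,
    eval_signPoly_pow hp hp1 (Nat.lt_succ_iff.1 (Finset.mem_range.1 hi))]
  rw [← mul_pow]
  simp

variable {A : Type*} [Ring A] [Algebra ℂ A]

lemma aeval_mul_eq_mul_aeval_comp {u a : A} (h : u * a = p • (a * u)) (F : ℂ[X]) :
    aeval u F * a = a * aeval u (F.comp (C p * X)) := by
  induction F using Polynomial.induction_on' with
  | add F G hF hG => simp only [map_add, add_mul, Polynomial.add_comp, mul_add, hF, hG]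
  | monomial k r =>
    have hk : u ^ k * a = p ^ k • (a * u ^ k) := by
      induction k with
      | zero => simp
      | succ k ih =>
        rw [pow_succ', mul_assoc, ih, mul_smul_comm, ← mul_assoc, h, smul_mul_assoc, mul_assoc,
          ← pow_succ', smul_smul, ← pow_succ]
    rw [← Polynomial.C_mul_X_pow_eq_monomial]
    simp only [Polynomial.mul_comp, Polynomial.C_comp, Polynomial.X_pow_comp, map_mul,
      Polynomial.aeval_C, Polynomial.aeval_X_pow, mul_pow, ← map_pow, ← Algebra.smul_def,
      mul_smul_comm, smul_mul_assoc, hk]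
    rw [smul_comm]

lemma mul_aeval_eq_aeval_comp_mul {u b : A} (h : b * u = p • (u * b)) (F : ℂ[X]) :
    b * aeval u F = aeval u (F.comp (C p * X)) * b := by
  induction F using Polynomial.induction_on' with
  | add F G hF hG => simp only [map_add, add_mul, Polynomial.add_comp, mul_add, hF, hG]
  | monomial k r =>
    have hk : b * u ^ k = p ^ k • (u ^ k * b) := by
      induction k with
      | zero => simp
      | succ k ih =>
        rw [pow_succ, ← mul_assoc, ih, smul_mul_assoc, mul_assoc, h, mul_smul_comm, ← mul_assoc,
          ← pow_succ, smul_smul, ← pow_succ]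
    rw [← Polynomial.C_mul_X_pow_eq_monomial]
    simp only [Polynomial.mul_comp, Polynomial.C_comp, Polynomial.X_pow_comp, map_mul,
      Polynomial.aeval_C, Polynomial.aeval_X_pow, mul_pow, ← map_pow, ← Algebra.smul_def,
      mul_smul_comm, smul_mul_assoc, hk]
    rw [smul_comm]

lemma geomRootPoly_eq_comb (hp : p ≠ 0) (hp1 : ∀ m : ℕ, 0 < m → p ^ m ≠ 1) (n : ℕ) :
    geomRootPoly p n = C (p ^ n * (p ^ (n + 1) - 1))⁻¹ *
      ((geomRootPoly p (n + 1)).comp (C p * X) - C (p ^ (n + 1)) * geomRootPoly p (n + 1)) := by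
  have h := sub_ne_zero.2 (hp1 (n + 1) n.succ_pos)
  have h1 : (C (p ^ n * (p ^ (n + 1) - 1))⁻¹ * C (p ^ n * (p ^ (n + 1) - 1)) : ℂ[X]) = 1 := by
    rw [← map_mul, inv_mul_cancel₀ (mul_ne_zero (pow_ne_zero _ hp) h), map_one]
  rw [geomRootPoly_succ_comp, geomRootPoly_succ]
  simp only [map_mul, map_sub, map_pow, map_one] at h1 ⊢
  linear_combination (-geomRootPoly p n) * h1

lemma aeval_signPoly_anticomm_left (hp : p ≠ 0) (hp1 : ∀ m : ℕ, 0 < m → p ^ m ≠ 1) {n : ℕ}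
    {u a : A} (hu : aeval u (geomRootPoly p (n + 1)) = 0) (h : u * a = p • (a * u)) :
    aeval u (signPoly p n) * a = -(a * aeval u (signPoly p n)) := by
  have h0 : a * aeval u (geomRootPoly p n) = 0 := by
    rw [geomRootPoly_eq_comb hp hp1, map_mul, map_sub, map_mul, hu, mul_zero, sub_zero,
      Polynomial.aeval_C, ← Algebra.smul_def, mul_smul_comm, ← aeval_mul_eq_mul_aeval_comp h, hu,
      zero_mul, smul_zero]
  rw [eq_neg_iff_add_eq_zero, aeval_mul_eq_mul_aeval_comp h, ← mul_add, ← map_add,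
    signPoly_comp_add hp hp1, map_mul, Polynomial.aeval_C, ← Algebra.smul_def, mul_smul_comm, h0,
    smul_zero]

lemma aeval_signPoly_anticomm_right (hp : p ≠ 0) (hp1 : ∀ m : ℕ, 0 < m → p ^ m ≠ 1) {n : ℕ}
    {u b : A} (hu : aeval u (geomRootPoly p (n + 1)) = 0) (h : b * u = p • (u * b)) :
    aeval u (signPoly p n) * b = -(b * aeval u (signPoly p n)) := by
  have h0 : aeval u (geomRootPoly p n) * b = 0 := by
    rw [geomRootPoly_eq_comb hp hp1, map_mul, map_sub, map_mul, hu, mul_zero, sub_zero,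
      Polynomial.aeval_C, ← Algebra.smul_def, smul_mul_assoc, ← mul_aeval_eq_aeval_comp_mul h, hu,
      mul_zero, smul_zero]
  rw [eq_neg_iff_add_eq_zero, mul_aeval_eq_aeval_comp_mul h, ← add_mul, ← map_add, add_comm,
    signPoly_comp_add hp hp1, map_mul, Polynomial.aeval_C, ← Algebra.smul_def, smul_mul_assoc, h0,
    smul_zero]

lemma aeval_signPoly_sq (hp : p ≠ 0) (hp1 : ∀ m : ℕ, 0 < m → p ^ m ≠ 1) {n : ℕ}
    {u : A} (hu : aeval u (geomRootPoly p (n + 1)) = 0) :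
    aeval u (signPoly p n) * aeval u (signPoly p n) = 1 := by
  obtain ⟨F, hF⟩ := geomRootPoly_dvd_signPoly_sq hp hp1 n
  have := congrArg (aeval u) hF
  rwa [map_mul, hu, zero_mul, map_sub, map_mul, map_one, sub_eq_zero] at this

end Polynomials

lemma subset_range_succ_cases {s : Finset ℕ} {m : ℕ} (h : s ⊆ Finset.range (m + 1)) :
    s ⊆ Finset.range m ∨ ∃ t ⊆ Finset.range m, s = insert m t := by
  rw [Finset.range_add_one] at h
  by_cases hm : m ∈ s
  · exact Or.inr ⟨s.erase m, Finset.subset_insert_iff.1 h, (Finset.insert_erase hm).symm⟩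
  · exact Or.inl ((Finset.subset_insert_iff_of_notMem hm).1 h)

section Sequences

variable {A : Type*} [Ring A] {X : ℕ → A}

/-- The ordered product of the `X i` with `i < m` and `i ∈ s`. -/
def orderedProd (X : ℕ → A) (s : Finset ℕ) (m : ℕ) : A :=
  ((List.range m).map fun i => if i ∈ s then X i else 1).prod

/-- The product of the `X i` with `i < m` and `i ∈ s`, indices decreasing. -/
def reverseProd (X : ℕ → A) (s : Finset ℕ) : ℕ → A
  | 0 => 1
  | m + 1 => (if m ∈ s then X m else 1) * reverseProd X s m

/-- The `k`-th elementary symmetric expression in `X 0, …, X (m - 1)`. -/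
def esymmProd (X : ℕ → A) (m k : ℕ) : A :=
  ∑ s ∈ (Finset.range m).powersetCard k, orderedProd X s m

lemma orderedProd_succ (s : Finset ℕ) (m : ℕ) :
    orderedProd X s (m + 1) = orderedProd X s m * (if m ∈ s then X m else 1) := by
  simp [orderedProd, List.range_succ]

lemma orderedProd_insert_self (s : Finset ℕ) (m : ℕ) :
    orderedProd X (insert m s) m = orderedProd X s m := by
  unfold orderedProd
  congr 1
  refine List.map_congr_left fun i hi => ?_
  have : i ≠ m := (List.mem_range.1 hi).ne
  simp [this]

lemma reverseProd_insert_of_le (s : Finset ℕ) {m r : ℕ} (h : r ≤ m) :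
    reverseProd X (insert m s) r = reverseProd X s r := by
  induction r with
  | zero => rfl
  | succ r ih =>
    have : r ≠ m := by omega
    simp [reverseProd, ih (by omega), this]

lemma esymmProd_zero (m : ℕ) : esymmProd X m 0 = 1 := by
  have : ∀ m, orderedProd X ∅ m = 1 := fun m => by
    induction m with
    | zero => simp [orderedProd]
    | succ m ih => simp [orderedProd_succ, ih]
  simp [esymmProd, this]

lemma esymmProd_of_lt {m k : ℕ} (h : m < k) : esymmProd X m k = 0 := by
  rw [esymmProd, Finset.powersetCard_eq_empty.2 (by simpa using h), Finset.sum_empty]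

lemma esymmProd_succ_succ (m k : ℕ) :
    esymmProd X (m + 1) (k + 1) = esymmProd X m (k + 1) + esymmProd X m k * X m := by
  have hm : ∀ k, ∀ s ∈ (Finset.range m).powersetCard k, m ∉ s := fun k s hs h =>
    absurd ((Finset.mem_powersetCard.1 hs).1 h) (by simp)
  rw [esymmProd, Finset.range_add_one, Finset.powersetCard_succ_insert (by simp),
    Finset.sum_union, Finset.sum_image]
  · rw [esymmProd, esymmProd, Finset.sum_mul]
    congr 1
    · exact Finset.sum_congr rfl fun s hs => by simp [orderedProd_succ, hm _ s hs]
    · exact Finset.sum_congr rfl fun s hs => by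
        simp [orderedProd_succ, orderedProd_insert_self]
  · intro s hs t ht h
    rw [← Finset.erase_insert (hm _ s hs), ← Finset.erase_insert (hm _ t ht), h]
  · refine Finset.disjoint_left.2 fun s hs h => ?_
    obtain ⟨t, -, rfl⟩ := Finset.mem_image.1 h
    exact hm _ _ hs (Finset.mem_insert_self _ _)

variable [Algebra ℂ A] {p : ℂ} {n : ℕ}

/-- The partial sums `1 + (p - 1) ∑_{j<m} X j`. -/
def partialSum (p : ℂ) (X : ℕ → A) (m : ℕ) : A := 1 + (p - 1) • ∑ j ∈ Finset.range m, X j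

lemma partialSum_succ (m : ℕ) : partialSum p X (m + 1) = partialSum p X m + (p - 1) • X m := by
  rw [partialSum, partialSum, Finset.sum_range_succ, smul_add, add_assoc]

lemma smul_esymmProd_succ (hsq : ∀ i < n, X i * X i = partialSum p X i * X i)
    (hcomm : ∀ i < n, Commute (X i) (partialSum p X i)) {m : ℕ} (hm : m ≤ n) (k : ℕ) :
    (p ^ (k + 1) - 1) • esymmProd X m (k + 1) =
      esymmProd X m k * (partialSum p X m - algebraMap ℂ A (p ^ k)) := by
  induction m generalizing k with
  | zero =>
    cases k with
    | zero => simp [esymmProd_of_lt, partialSum]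
    | succ k => simp [esymmProd_of_lt]
  | succ m ih =>
    have h1 := ih (by omega) k
    cases k with
    | zero =>
      rw [esymmProd_succ_succ, smul_add, h1, partialSum_succ]
      simp [esymmProd_zero]
      abel
    | succ k =>
      have h2 := congrArg (fun e => p • (e * X m)) (ih (by omega) k)
      simp only [smul_mul_assoc, mul_assoc, sub_mul] at h2
      have hs := hsq m (by omega)
      have hc : partialSum p X m * X m = X m * partialSum p X m := (hcomm m (by omega)).eq.symm
      rw [esymmProd_succ_succ, smul_add, h1, esymmProd_succ_succ m k, partialSum_succ]
      simp only [add_mul, mul_add, mul_sub, mul_assoc, Algebra.algebraMap_eq_smul_one,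
        mul_smul_comm, smul_mul_assoc, mul_one, one_mul, hs, ← hc, smul_sub] at h2 ⊢
      have h3 : p ^ (k + 1) = p * p ^ k := pow_succ' p k
      have h4 : p ^ (k + 1 + 1) = p * p ^ (k + 1) := pow_succ' p _
      rw [← sub_eq_zero] at h2 ⊢
      rw [← h2]
      rw [h4, h3]
      module

lemma smul_esymmProd (hsq : ∀ i < n, X i * X i = partialSum p X i * X i)
    (hcomm : ∀ i < n, Commute (X i) (partialSum p X i)) (k : ℕ) :
    (∏ l ∈ Finset.range k, (p ^ (l + 1) - 1)) • esymmProd X n k =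
      Polynomial.aeval (partialSum p X n) (geomRootPoly p k) := by
  induction k with
  | zero => simp [esymmProd_zero, geomRootPoly]
  | succ k ih =>
    rw [Finset.prod_range_succ, mul_smul, smul_esymmProd_succ hsq hcomm le_rfl, ← smul_mul_assoc,
      ih, geomRootPoly_succ]
    simp only [map_mul, map_sub, Polynomial.aeval_X, Polynomial.aeval_C]

lemma aeval_geomRootPoly_eq_zero (hsq : ∀ i < n, X i * X i = partialSum p X i * X i)
    (hcomm : ∀ i < n, Commute (X i) (partialSum p X i)) :
    Polynomial.aeval (partialSum p X n) (geomRootPoly p (n + 1)) = 0 := by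
  rw [← smul_esymmProd hsq hcomm, esymmProd_of_lt n.lt_succ_self, smul_zero]

lemma sum_powerset_orderedProd_eq_aeval (hp1 : ∀ m : ℕ, 0 < m → p ^ m ≠ 1)
    (hsq : ∀ i < n, X i * X i = partialSum p X i * X i)
    (hcomm : ∀ i < n, Commute (X i) (partialSum p X i)) :
    ∑ s ∈ (Finset.range n).powerset,
      ((-1) ^ s.card * ∏ l ∈ Finset.range s.card, (1 + (p ^ l)⁻¹)) • orderedProd X s n =
      Polynomial.aeval (partialSum p X n) (signPoly p n) := by
  rw [Finset.sum_powerset, signPoly, map_sum, Finset.card_range]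
  refine Finset.sum_congr rfl fun k _ => ?_
  rw [map_mul, ← smul_esymmProd hsq hcomm, Polynomial.aeval_C, ← Algebra.smul_def, smul_smul,
    signCoeff, Finset.prod_div_distrib, mul_assoc, div_mul_cancel₀, esymmProd, Finset.smul_sum]
  · exact Finset.sum_congr rfl fun s hs => by rw [(Finset.mem_powersetCard.1 hs).2]
  · exact Finset.prod_ne_zero_iff.2 fun l _ => sub_ne_zero.2 (hp1 _ l.succ_pos)

lemma partialSum_mul_eq_smul {a : A} {i : ℕ} (hi : i < n) (h0 : a * X i = 0)
    (h1 : X i * a = partialSum p X i * a) (hlt : ∀ j < i, X j * a = a * X j)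
    (hgt : ∀ j, i < j → j < n → X j * a = p • (a * X j)) :
    partialSum p X n * a = p • (a * partialSum p X n) := by
  have hu : partialSum p X i * a = a * partialSum p X i := by
    rw [partialSum, add_mul, mul_add, one_mul, mul_one, smul_mul_assoc, mul_smul_comm,
      Finset.sum_mul, Finset.mul_sum,
      Finset.sum_congr rfl fun j hj => hlt j (Finset.mem_range.1 hj)]
  have key : ∀ m, i + 1 ≤ m → m ≤ n → partialSum p X m * a = p • (a * partialSum p X m) := by
    intro m hm
    induction m, hm using Nat.le_induction with
    | base =>
      intro _
      rw [partialSum_succ, add_mul, mul_add, smul_mul_assoc, mul_smul_comm, h0, h1, hu]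
      module
    | succ m hm ih =>
      intro hmn
      rw [partialSum_succ, add_mul, mul_add, smul_mul_assoc, mul_smul_comm, ih (by omega),
        hgt m (by omega) (by omega)]
      module
  exact key n hi le_rfl

lemma mul_partialSum_eq_smul {b : A} {i : ℕ} (hi : i < n) (h0 : X i * b = 0)
    (h1 : b * X i = partialSum p X i * b) (hlt : ∀ j < i, X j * b = b * X j)
    (hgt : ∀ j, i < j → j < n → b * X j = p • (X j * b)) :
    b * partialSum p X n = p • (partialSum p X n * b) := by
  have hu : b * partialSum p X i = partialSum p X i * b := by
    rw [partialSum, add_mul, mul_add, one_mul, mul_one, smul_mul_assoc, mul_smul_comm,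
      Finset.sum_mul, Finset.mul_sum,
      Finset.sum_congr rfl fun j hj => hlt j (Finset.mem_range.1 hj)]
  have key : ∀ m, i + 1 ≤ m → m ≤ n → b * partialSum p X m = p • (partialSum p X m * b) := by
    intro m hm
    induction m, hm using Nat.le_induction with
    | base =>
      intro _
      rw [partialSum_succ, add_mul, mul_add, smul_mul_assoc, mul_smul_comm, h0, h1, hu]
      module
    | succ m hm ih =>
      intro hmn
      rw [partialSum_succ, add_mul, mul_add, smul_mul_assoc, mul_smul_comm, ih (by omega),
        hgt m (by omega) (by omega)]
      module
  exact key n hi le_rfl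

lemma mul_reverseProd {b : ℕ → A} {x : A} {r : ℂ} {m : ℕ} (h : ∀ j < m, x * b j = r • (b j * x))
    {s : Finset ℕ} (hs : s ⊆ Finset.range m) :
    x * reverseProd b s m = r ^ s.card • (reverseProd b s m * x) := by
  induction m generalizing s with
  | zero =>
    obtain rfl : s = ∅ := by simpa using hs
    simp [reverseProd]
  | succ m ih =>
    have ih' := fun t ht => ih (fun j hj => h j (by omega)) (s := t) ht
    rcases subset_range_succ_cases hs with hs | ⟨t, ht, rfl⟩
    · have hm : m ∉ s := fun hm => by simpa using hs hm
      simp [reverseProd, hm, ih' s hs]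
    · have hm : m ∉ t := fun hm => by simpa using ht hm
      simp only [reverseProd, Finset.mem_insert_self, if_true, reverseProd_insert_of_le t le_rfl,
        Finset.card_insert_of_notMem hm]
      rw [← mul_assoc, h m (by omega), smul_mul_assoc, mul_assoc, ih' t ht, mul_smul_comm,
        smul_smul, pow_succ', mul_assoc]

lemma orderedProd_mul_reverseProd {a b X : ℕ → A} {K q r : ℂ} {n : ℕ}
    (hX : ∀ i < n, a i * b i = (K * (q ^ (2 * (i + 1)))⁻¹) • X i)
    (h : ∀ j i, j < i → i < n → X i * b j = r • (b j * X i)) {m : ℕ} (hm : m ≤ n)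
    {s : Finset ℕ} (hs : s ⊆ Finset.range m) :
    orderedProd a s m * reverseProd b s m =
      (K ^ s.card * (q ^ (2 * ∑ i ∈ s, (i + 1)))⁻¹ * r ^ (s.card.choose 2)) •
        orderedProd X s m := by
  induction m generalizing s with
  | zero =>
    obtain rfl : s = ∅ := by simpa using hs
    simp [reverseProd, orderedProd]
  | succ m ih =>
    have ih' := fun t ht => ih (by omega) (s := t) ht
    rcases subset_range_succ_cases hs with hs | ⟨t, ht, rfl⟩
    · have hm : m ∉ s := fun hm => by simpa using hs hm
      simp [reverseProd, orderedProd_succ, hm, ih' s hs]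
    · have hmt : m ∉ t := fun hm => by simpa using ht hm
      simp only [reverseProd, orderedProd_succ, Finset.mem_insert_self, if_true,
        reverseProd_insert_of_le t le_rfl, orderedProd_insert_self,
        Finset.card_insert_of_notMem hmt, Finset.sum_insert hmt]
      have h1 : orderedProd a t m * a m * (b m * reverseProd b t m) =
          orderedProd a t m * ((a m * b m) * reverseProd b t m) := by simp only [mul_assoc]
      rw [h1, hX m (by omega), smul_mul_assoc,
        mul_reverseProd (fun j hj => h j m hj (by omega)) ht, mul_smul_comm, mul_smul_comm,
        ← mul_assoc, ih' t ht, smul_mul_assoc, smul_smul, smul_smul]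
      congr 1
      rw [Nat.choose_succ_succ' t.card 1, Nat.choose_one_right, mul_add 2, pow_add q, pow_add r,
        mul_inv, pow_succ]
      ring

end Sequences

section Clifford

/-- The generators of `Cl_{2n}(q,c)` indexed by `ℕ`, zero out of range. -/
def gammaNat (n : ℕ) (q c : ℂ) (i : ℕ) : Cl (2 * n) q c :=
  if h : i < 2 * n then γ (2 * n) q c ⟨i, h⟩ else 0

/-- The generators paired with `gammaNat n q c i`. -/
def gammaDual (n : ℕ) (q c : ℂ) (i : ℕ) : Cl (2 * n) q c := gammaNat n q c (2 * n - 1 - i)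

/-- The scalar `c² q^{2n+1} (q + q⁻¹)`. -/
def pairConst (n : ℕ) (q c : ℂ) : ℂ := c ^ 2 * q ^ (2 * n + 1) * (q + q⁻¹)

/-- The rescaled products `γ_i γ_{i'}`. -/
def pairProd (n : ℕ) (q c : ℂ) (i : ℕ) : Cl (2 * n) q c :=
  (q ^ (2 * (i + 1)) / pairConst n q c) • (gammaNat n q c i * gammaDual n q c i)

variable {n : ℕ} {q c : ℂ}

lemma gammaNat_coe (i : Fin (2 * n)) : gammaNat n q c i = γ (2 * n) q c i := by
  simp [gammaNat]

lemma gammaNat_sq (i : ℕ) : gammaNat n q c i * gammaNat n q c i = 0 := by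
  by_cases h : i < 2 * n
  · have := RingQuot.mkAlgHom_rel ℂ (Rel.sq (N := 2 * n) (q := q) (c := c) ⟨i, h⟩ (by simp; omega))
    simpa [gammaNat, h, γ] using this
  · simp [gammaNat, h]

lemma gammaNat_swap {i j : ℕ} (hij : i < j) (h : i + j + 1 ≠ 2 * n) :
    gammaNat n q c j * gammaNat n q c i = (-(q ^ 2)) • (gammaNat n q c i * gammaNat n q c j) := by
  by_cases hj : j < 2 * n
  · have := RingQuot.mkAlgHom_rel ℂ (Rel.swap (N := 2 * n) (q := q) (c := c)
      ⟨i, hij.trans hj⟩ ⟨j, hj⟩ hij h)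
    simpa only [gammaNat, hj, hij.trans hj, dif_pos, γ, map_mul, map_smul] using this
  · simp [gammaNat, hj]

lemma gammaNat_swap' (hq : q ≠ 0) {i j : ℕ} (hij : i < j) (h : i + j + 1 ≠ 2 * n) :
    gammaNat n q c i * gammaNat n q c j =
      (-(q ^ 2))⁻¹ • (gammaNat n q c j * gammaNat n q c i) := by
  rw [gammaNat_swap hij h, smul_smul, inv_mul_cancel₀ (neg_ne_zero.2 (pow_ne_zero _ hq)), one_smul]

lemma gammaDual_mul_gammaNat {i : ℕ} (hi : i < n) :
    gammaDual n q c i * gammaNat n q c i =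
      -(gammaNat n q c i * gammaDual n q c i) + (q ^ 2 - q⁻¹ ^ 2) •
        (∑ k ∈ Finset.range i, (q ^ (2 * (k : ℤ) - 2 * (i : ℤ) + 2)) •
          (gammaNat n q c k * gammaDual n q c k)) +
        algebraMap ℂ _ (c ^ 2 * q ^ (((2 * n : ℕ) : ℤ) - 2 * (i : ℤ) - 1) * (q + q⁻¹)) := by
  have h := RingQuot.mkAlgHom_rel ℂ (Rel.pair (N := 2 * n) (q := q) (c := c)
    ⟨i, by omega⟩ (by simp; omega))
  have hs : ∀ F : ℕ → Cl (2 * n) q c, ∑ k ∈ Finset.Iio (⟨i, by omega⟩ : Fin (2 * n)), F k =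
      ∑ k ∈ Finset.range i, F k := fun F => by
    have := Finset.sum_map (Finset.Iio (⟨i, by omega⟩ : Fin (2 * n))) Fin.valEmbedding F
    rw [Fin.map_valEmbedding_Iio, Nat.Iio_eq_range] at this
    exact this.symm
  have hg : ∀ k, k < 2 * n → gammaNat n q c (2 * n - 1 - k) =
      γ (2 * n) q c ⟨2 * n - 1 - k, by omega⟩ := fun k hk => by
    rw [gammaNat, dif_pos (by omega)]
  rw [← hs fun k => (q ^ (2 * (k : ℤ) - 2 * (i : ℤ) + 2)) •
          (gammaNat n q c k * gammaDual n q c k)]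
  have hi2 : i < 2 * n := by omega
  simp only [gammaDual, gammaNat_coe, hg, Fin.is_lt, hi2]
  rw [show gammaNat n q c i = γ (2 * n) q c ⟨i, hi2⟩ from gammaNat_coe ⟨i, hi2⟩]
  simp only [pairSum, map_mul, map_add, map_neg, map_smul, map_sum, AlgHom.commutes] at h ⊢
  exact h

lemma mul_mul_eq_smul {A : Type*} [Ring A] [Algebra ℂ A] {x y z : A} {r s t : ℂ}
    (hx : x * z = r • (z * x)) (hy : y * z = s • (z * y)) (ht : r * s = t) :
    (x * y) * z = t • (z * (x * y)) := by
  rw [mul_assoc, hy, mul_smul_comm, ← mul_assoc, hx, smul_mul_assoc, smul_smul, mul_assoc,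
    ← ht, mul_comm s]

lemma pairProd_mul_of_smul {x : Cl (2 * n) q c} {i : ℕ} {t : ℂ}
    (h : (gammaNat n q c i * gammaDual n q c i) * x =
      t • (x * (gammaNat n q c i * gammaDual n q c i))) :
    pairProd n q c i * x = t • (x * pairProd n q c i) := by
  rw [pairProd, smul_mul_assoc, h, mul_smul_comm, smul_comm]

lemma pairProd_mul_gammaNat_of_lt (hq : q ≠ 0) {i j : ℕ} (hji : j < i) (hi : i < n) :
    pairProd n q c j * gammaNat n q c i = gammaNat n q c i * pairProd n q c j := by
  have := pairProd_mul_of_smul (mul_mul_eq_smul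
    (gammaNat_swap' (n := n) (q := q) (c := c) hq hji (by omega))
    (gammaNat_swap (n := n) (q := q) (c := c) (i := i) (j := 2 * n - 1 - j) (by omega) (by omega))
    (inv_mul_cancel₀ (neg_ne_zero.2 (pow_ne_zero 2 hq))))
  rwa [one_smul] at this

lemma pairProd_mul_gammaDual_of_lt (hq : q ≠ 0) {i j : ℕ} (hji : j < i) (hi : i < n) :
    pairProd n q c j * gammaDual n q c i = gammaDual n q c i * pairProd n q c j := by
  have := pairProd_mul_of_smul (mul_mul_eq_smul
    (gammaNat_swap' (n := n) (q := q) (c := c) (i := j) (j := 2 * n - 1 - i) hq (by omega)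
      (by omega))
    (gammaNat_swap (n := n) (q := q) (c := c) (i := 2 * n - 1 - i) (j := 2 * n - 1 - j) (by omega)
      (by omega))
    (inv_mul_cancel₀ (neg_ne_zero.2 (pow_ne_zero 2 hq))))
  rwa [one_smul] at this

lemma pairProd_mul_gammaNat_of_gt {i j : ℕ} (hij : i < j) (hj : j < n) :
    pairProd n q c j * gammaNat n q c i = q ^ 4 • (gammaNat n q c i * pairProd n q c j) :=
  pairProd_mul_of_smul (mul_mul_eq_smul
    (gammaNat_swap (n := n) (q := q) (c := c) (i := i) (j := j) hij (by omega))
    (gammaNat_swap (n := n) (q := q) (c := c) (i := i) (j := 2 * n - 1 - j) (by omega) (by omega))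
    (by ring))

lemma pairProd_mul_gammaDual_of_gt (hq : q ≠ 0) {i j : ℕ} (hij : i < j) (hj : j < n) :
    pairProd n q c j * gammaDual n q c i = (q ^ 4)⁻¹ • (gammaDual n q c i * pairProd n q c j) :=
  pairProd_mul_of_smul (mul_mul_eq_smul
    (gammaNat_swap' (n := n) (q := q) (c := c) (i := j) (j := 2 * n - 1 - i) hq (by omega)
      (by omega))
    (gammaNat_swap' (n := n) (q := q) (c := c) (i := 2 * n - 1 - j) (j := 2 * n - 1 - i) hq
      (by omega) (by omega))
    (by rw [← mul_inv]; ring))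

lemma gammaNat_mul_pairProd (i : ℕ) : gammaNat n q c i * pairProd n q c i = 0 := by
  rw [pairProd, mul_smul_comm, ← mul_assoc, gammaNat_sq, zero_mul, smul_zero]

lemma pairProd_mul_gammaDual (i : ℕ) : pairProd n q c i * gammaDual n q c i = 0 := by
  rw [pairProd, smul_mul_assoc, mul_assoc, gammaDual, gammaNat_sq, mul_zero, smul_zero]

lemma smul_gammaDual_mul_gammaNat (hq : q ≠ 0) (hC : pairConst n q c ≠ 0) {i : ℕ} (hi : i < n) :
    (q ^ (2 * (i + 1)) / pairConst n q c) • (gammaDual n q c i * gammaNat n q c i) =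
      partialSum (q ^ 4) (pairProd n q c) i - pairProd n q c i := by
  have hz : ∀ k : ℕ, (q ^ (2 * (i + 1)) / pairConst n q c) * ((q ^ 2 - q⁻¹ ^ 2) *
      q ^ (2 * (k : ℤ) - 2 * (i : ℤ) + 2)) =
        (q ^ 4 - 1) * (q ^ (2 * (k + 1)) / pairConst n q c) := fun k => by
    have h1 : q ^ (2 * (i + 1)) * q ^ (2 * (k : ℤ) - 2 * (i : ℤ) + 2) =
        q ^ 2 * q ^ (2 * (k + 1)) := by
      rw [← zpow_natCast, ← zpow_natCast, ← zpow_natCast, ← zpow_add₀ hq, ← zpow_add₀ hq]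
      congr 1
      push_cast
      ring
    have h2 : (q ^ 2 - q⁻¹ ^ 2) * q ^ 2 = q ^ 4 - 1 := by
      field_simp
    rw [← h2]
    linear_combination (q ^ 2 - q⁻¹ ^ 2) / pairConst n q c * h1
  have hc : (q ^ (2 * (i + 1)) / pairConst n q c) *
      (c ^ 2 * q ^ (((2 * n : ℕ) : ℤ) - 2 * (i : ℤ) - 1) * (q + q⁻¹)) = 1 := by
    have h1 : q ^ (2 * (i + 1)) * q ^ (((2 * n : ℕ) : ℤ) - 2 * (i : ℤ) - 1) =
        q ^ (2 * n + 1) := by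
      rw [← zpow_natCast, ← zpow_natCast, ← zpow_add₀ hq]
      congr 1
      push_cast
      ring
    rw [div_mul_eq_mul_div, div_eq_one_iff_eq hC, pairConst, ← h1]
    ring
  rw [gammaDual_mul_gammaNat hi, Algebra.algebraMap_eq_smul_one, smul_add, smul_add, smul_smul,
    smul_smul, hc, one_smul, smul_neg, ← pairProd, Finset.smul_sum, partialSum, Finset.smul_sum,
    Finset.sum_congr rfl fun k _ => by rw [smul_smul, mul_assoc, hz, mul_smul, ← pairProd]]
  abel

lemma commute_pairProd_partialSum (hq : q ≠ 0) {i : ℕ} (hi : i < n) :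
    Commute (pairProd n q c i) (partialSum (q ^ 4) (pairProd n q c) i) := by
  refine (Commute.one_right _).add_right
    ((Commute.sum_right _ _ _ fun j hj => Commute.symm ?_).smul_right _)
  have hj := Finset.mem_range.1 hj
  have ha : Commute (pairProd n q c j) (gammaNat n q c i) := pairProd_mul_gammaNat_of_lt hq hj hi
  have hb : Commute (pairProd n q c j) (gammaDual n q c i) := pairProd_mul_gammaDual_of_lt hq hj hi
  exact (ha.mul_right hb).smul_right _

lemma pairProd_mul_gammaNat (hq : q ≠ 0) (hC : pairConst n q c ≠ 0) {i : ℕ} (hi : i < n) :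
    pairProd n q c i * gammaNat n q c i =
      partialSum (q ^ 4) (pairProd n q c) i * gammaNat n q c i := by
  have hu : Commute (gammaNat n q c i) (partialSum (q ^ 4) (pairProd n q c) i) :=
    (Commute.one_right _).add_right ((Commute.sum_right _ _ _ fun j hj =>
      Commute.symm (pairProd_mul_gammaNat_of_lt hq (Finset.mem_range.1 hj) hi)).smul_right _)
  rw [pairProd, smul_mul_assoc, mul_assoc, ← mul_smul_comm, smul_gammaDual_mul_gammaNat hq hC hi,
    mul_sub, gammaNat_mul_pairProd, sub_zero, hu.eq]

lemma gammaDual_mul_pairProd (hq : q ≠ 0) (hC : pairConst n q c ≠ 0) {i : ℕ} (hi : i < n) :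
    gammaDual n q c i * pairProd n q c i =
      partialSum (q ^ 4) (pairProd n q c) i * gammaDual n q c i := by
  rw [pairProd, mul_smul_comm, ← mul_assoc, ← smul_mul_assoc,
    smul_gammaDual_mul_gammaNat hq hC hi, sub_mul, pairProd_mul_gammaDual, sub_zero]

lemma pairProd_sq (hq : q ≠ 0) (hC : pairConst n q c ≠ 0) {i : ℕ} (hi : i < n) :
    pairProd n q c i * pairProd n q c i =
      partialSum (q ^ 4) (pairProd n q c) i * pairProd n q c i := by
  calc pairProd n q c i * pairProd n q c i =
      (q ^ (2 * (i + 1)) / pairConst n q c) •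
        (pairProd n q c i * gammaNat n q c i * gammaDual n q c i) := by
        rw [mul_assoc, ← mul_smul_comm, ← pairProd]
    _ = _ := by
        rw [pairProd_mul_gammaNat hq hC hi, mul_assoc, ← mul_smul_comm, ← pairProd]

lemma partialSum_mul_gammaNat (hq : q ≠ 0) (hC : pairConst n q c ≠ 0) {i : ℕ} (hi : i < n) :
    partialSum (q ^ 4) (pairProd n q c) n * gammaNat n q c i =
      q ^ 4 • (gammaNat n q c i * partialSum (q ^ 4) (pairProd n q c) n) :=
  partialSum_mul_eq_smul hi (gammaNat_mul_pairProd i) (pairProd_mul_gammaNat hq hC hi)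
    (fun _ hj => pairProd_mul_gammaNat_of_lt hq hj hi)
    fun _ hij hj => pairProd_mul_gammaNat_of_gt hij hj

lemma gammaDual_mul_partialSum (hq : q ≠ 0) (hC : pairConst n q c ≠ 0) {i : ℕ} (hi : i < n) :
    gammaDual n q c i * partialSum (q ^ 4) (pairProd n q c) n =
      q ^ 4 • (partialSum (q ^ 4) (pairProd n q c) n * gammaDual n q c i) :=
  mul_partialSum_eq_smul hi (pairProd_mul_gammaDual i) (gammaDual_mul_pairProd hq hC hi)
    (fun _ hj => pairProd_mul_gammaDual_of_lt hq hj hi)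
    fun _ hij hj => by
      rw [pairProd_mul_gammaDual_of_gt hq hij hj, smul_smul,
        mul_inv_cancel₀ (pow_ne_zero 4 hq), one_smul]

lemma prod_map_range_sub_eq_reverseProd {A : Type*} [Ring A] (b : ℕ → A) (s : Finset ℕ) (m : ℕ) :
    ((List.range m).map fun i => if m - 1 - i ∈ s then b (m - 1 - i) else 1).prod =
      reverseProd b s m := by
  induction m with
  | zero => rfl
  | succ m ih =>
    rw [List.range_succ_eq_map, List.map_cons, List.prod_cons, List.map_map, reverseProd, ← ih]
    simp [Function.comp_def, Nat.sub_sub, add_comm 1]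

/-- The set of indices where `J` is true. -/
def support (J : Fin n → Bool) : Finset ℕ :=
  (Finset.univ.filter fun l => J l = true).map Fin.valEmbedding

lemma mem_support_iff (J : Fin n → Bool) (l : Fin n) : (l : ℕ) ∈ support J ↔ J l = true := by
  rw [support, ← Fin.valEmbedding_apply, Finset.mem_map']
  simp

lemma support_subset (J : Fin n → Bool) : support J ⊆ Finset.range n := fun i hi => by
  obtain ⟨l, -, rfl⟩ := Finset.mem_map.1 hi
  simp

lemma card_support (J : Fin n → Bool) : (support J).card = ellJ n J := by
  rw [support, Finset.card_map, ellJ]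

lemma sum_support (J : Fin n → Bool) : ∑ i ∈ support J, (i + 1) = LJ n J := by
  rw [support, Finset.sum_map, LJ, Finset.sum_filter]
  rfl

lemma monoPair_eq (J : Fin n → Bool) :
    monoPair n q c J = orderedProd (gammaNat n q c) (support J) n *
      reverseProd (gammaDual n q c) (support J) n := by
  have h : monoPair n q c J = ((List.range (2 * n)).map fun m =>
      if min m (2 * n - 1 - m) ∈ support J then gammaNat n q c m else 1).prod := by
    rw [monoPair, ← List.map_coe_finRange_eq_range, List.map_map]
    congr 1
    refine List.map_congr_left fun m _ => ?_
    have := mem_support_iff J (lowEven n m)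
    simp only [Function.comp_apply, gammaNat_coe, ← this]
    rfl
  rw [h, show List.range (2 * n) = List.range (n + n) by rw [two_mul], List.range_add,
    List.map_append, List.prod_append, List.map_map, orderedProd,
    ← prod_map_range_sub_eq_reverseProd]
  congr 2
  · refine List.map_congr_left fun i hi => ?_
    have := List.mem_range.1 hi
    rw [min_eq_left (by omega)]
  · refine List.map_congr_left fun i hi => ?_
    have := List.mem_range.1 hi
    simp only [Function.comp_apply, gammaDual]
    rw [show min (n + i) (2 * n - 1 - (n + i)) = n - 1 - i by omega,
      show 2 * n - 1 - (n - 1 - i) = n + i by omega]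

lemma prod_coeff_eq (hq : q ≠ 0) (hD : q * (q + q⁻¹) * c ^ 2 ≠ 0) (k : ℕ) :
    (∏ l ∈ Finset.range k,
      ((q ^ (2 * (l : ℤ)) + q ^ (-(2 * (l : ℤ)))) / (q * (q + q⁻¹) * c ^ 2))) *
      q ^ (-(k : ℤ) * (2 * (n : ℤ) - (k : ℤ) + 1)) *
      (pairConst n q c ^ k * (q ^ 4)⁻¹ ^ (k.choose 2)) =
      ∏ l ∈ Finset.range k, (1 + ((q ^ 4) ^ l)⁻¹) := by
  induction k with
  | zero => simp
  | succ k ih =>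
    have hC : pairConst n q c = (q * (q + q⁻¹) * c ^ 2) * q ^ (2 * n) := by
      rw [pairConst]; ring
    have h1 : q ^ (-((k + 1 : ℕ) : ℤ) * (2 * (n : ℤ) - ((k + 1 : ℕ) : ℤ) + 1)) =
        q ^ (-(k : ℤ) * (2 * (n : ℤ) - (k : ℤ) + 1)) * q ^ (2 * (k : ℤ)) *
          (q ^ (2 * n))⁻¹ := by
      rw [← zpow_natCast, ← zpow_neg, ← zpow_add₀ hq, ← zpow_add₀ hq]
      congr 1
      push_cast
      ring
    have h2 : (q ^ (2 * (k : ℤ)) + q ^ (-(2 * (k : ℤ)))) * q ^ (2 * (k : ℤ)) * (q ^ 4)⁻¹ ^ k =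
        1 + ((q ^ 4) ^ k)⁻¹ := by
      have h3 : q ^ (2 * (k : ℤ)) = q ^ (2 * k) := by
        rw [← zpow_natCast]; congr 1
      rw [zpow_neg, h3, inv_pow, ← pow_mul]
      have h4 : q ^ (4 * k) = q ^ (2 * k) * q ^ (2 * k) := by rw [← pow_add]; congr 1; ring
      rw [h4]
      field_simp
    rw [Finset.prod_range_succ, Finset.prod_range_succ, ← ih, ← h2, h1,
      Nat.choose_succ_succ' k 1, Nat.choose_one_right, pow_add, pow_succ (pairConst n q c)]
    have h5 : (q * (q + q⁻¹) * c ^ 2)⁻¹ * (q ^ (2 * n))⁻¹ * pairConst n q c = 1 := by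
      rw [← mul_inv, ← hC, inv_mul_cancel₀]
      rw [hC]
      exact mul_ne_zero hD (pow_ne_zero _ hq)
    rw [div_eq_mul_inv]
    generalize (∏ l ∈ Finset.range k,
      ((q ^ (2 * (l : ℤ)) + q ^ (-(2 * (l : ℤ)))) / (q * (q + q⁻¹) * c ^ 2))) = P
    generalize (q * (q + q⁻¹) * c ^ 2)⁻¹ = D at *
    generalize (q ^ 4)⁻¹ = r at *
    generalize q ^ (2 * (k : ℤ)) = x at *
    generalize q ^ (-(2 * (k : ℤ))) = y at *
    linear_combination (P * (x + y) * q ^ (-(k : ℤ) * (2 * (n : ℤ) - (k : ℤ) + 1)) * x *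
      pairConst n q c ^ k * r ^ k * r ^ k.choose 2) * h5

lemma zZero_eq_sum_powerset (hq : q ≠ 0) (hD : q * (q + q⁻¹) * c ^ 2 ≠ 0) :
    zZero n q c = ∑ s ∈ (Finset.range n).powerset,
      ((-1) ^ s.card * ∏ l ∈ Finset.range s.card, (1 + ((q ^ 4) ^ l)⁻¹)) •
        orderedProd (pairProd n q c) s n := by
  have hC : pairConst n q c ≠ 0 := by
    have : pairConst n q c = (q * (q + q⁻¹) * c ^ 2) * q ^ (2 * n) := by rw [pairConst]; ring
    rw [this]
    exact mul_ne_zero hD (pow_ne_zero _ hq)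
  refine Finset.sum_nbij' support (fun s l => decide ((l : ℕ) ∈ s))
    (fun J _ => Finset.mem_powerset.2 (support_subset J)) (fun _ _ => Finset.mem_univ _)
    (fun J _ => ?_) (fun s hs => ?_) fun J _ => ?_
  · ext l
    simp [mem_support_iff]
  · ext i
    constructor
    · intro hi
      obtain ⟨l, hl, rfl⟩ := Finset.mem_map.1 hi
      simpa using hl
    · intro hi
      have := Finset.mem_range.1 (Finset.mem_powerset.1 hs hi)
      exact (mem_support_iff _ ⟨i, this⟩).2 (by simpa using hi)
  · have hX : ∀ i < n, gammaNat n q c i * gammaDual n q c i =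
        (pairConst n q c * (q ^ (2 * (i + 1)))⁻¹) • pairProd n q c i := fun i _ => by
      have : pairConst n q c * (q ^ (2 * (i + 1)))⁻¹ * (q ^ (2 * (i + 1)) / pairConst n q c) =
          1 := by field_simp
      rw [pairProd, smul_smul, this, one_smul]
    rw [monoPair_eq, orderedProd_mul_reverseProd hX
      (fun j i hji hi => pairProd_mul_gammaDual_of_gt hq hji hi) le_rfl (support_subset J),
      smul_smul, card_support, sum_support, ← prod_coeff_eq (n := n) hq hD]
    congr 1
    have h1 : q ^ (2 * (LJ n J : ℤ) - (ellJ n J : ℤ) * (2 * (n : ℤ) - (ellJ n J : ℤ) + 1)) =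
        q ^ (2 * LJ n J) * q ^ (-(ellJ n J : ℤ) * (2 * (n : ℤ) - (ellJ n J : ℤ) + 1)) := by
      rw [← zpow_natCast, ← zpow_add₀ hq]
      congr 1
      push_cast
      ring
    have h2 : q ^ (2 * LJ n J) * (q ^ (2 * LJ n J))⁻¹ = 1 := mul_inv_cancel₀ (pow_ne_zero _ hq)
    rw [h1]
    generalize (∏ l ∈ Finset.range (ellJ n J),
      ((q ^ (2 * (l : ℤ)) + q ^ (-(2 * (l : ℤ)))) / (q * (q + q⁻¹) * c ^ 2))) = P
    generalize (q ^ (2 * LJ n J))⁻¹ = y at *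
    linear_combination ((-1) ^ ellJ n J * P *
      q ^ (-(ellJ n J : ℤ) * (2 * (n : ℤ) - (ellJ n J : ℤ) + 1)) *
      (pairConst n q c ^ ellJ n J * (q ^ 4)⁻¹ ^ ((ellJ n J).choose 2))) * h2

end Clifford

/-- `z_0 γ_i = -γ_i z_0` for all `i`, and `z_0² = 1`. -/
theorem zZero_anticommutes_and_squares_to_one (n : ℕ) (hn : 2 ≤ n) (q c : ℂ)
    (hq : q ≠ 0) (hqr : ∀ m : ℕ, 0 < m → q ^ m ≠ 1) (hc : c ≠ 0) :
    (∀ i : Fin (2 * n), zZero n q c * γ (2 * n) q c i = -(γ (2 * n) q c i * zZero n q c)) ∧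
    zZero n q c * zZero n q c = 1 := by
  have hp : q ^ 4 ≠ 0 := pow_ne_zero 4 hq
  have hp1 : ∀ m : ℕ, 0 < m → (q ^ 4) ^ m ≠ 1 := fun m hm => by
    rw [← pow_mul]
    exact hqr _ (by omega)
  have hqq : q + q⁻¹ ≠ 0 := fun h => by
    refine hqr 4 (by norm_num) ?_
    have h2 : q ^ 2 = -1 := by
      have := congrArg (q * ·) h
      simp only [mul_add, mul_inv_cancel₀ hq, mul_zero] at this
      linear_combination this
    linear_combination (q ^ 2 - 1) * h2
  have hD : q * (q + q⁻¹) * c ^ 2 ≠ 0 := mul_ne_zero (mul_ne_zero hq hqq) (pow_ne_zero 2 hc)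
  have hC : pairConst n q c ≠ 0 :=
    mul_ne_zero (mul_ne_zero (pow_ne_zero 2 hc) (pow_ne_zero _ hq)) hqq
  have hsq : ∀ i < n, pairProd n q c i * pairProd n q c i =
      partialSum (q ^ 4) (pairProd n q c) i * pairProd n q c i := fun _ => pairProd_sq hq hC
  have hcomm : ∀ i < n, Commute (pairProd n q c i) (partialSum (q ^ 4) (pairProd n q c) i) :=
    fun _ => commute_pairProd_partialSum hq
  have hu := aeval_geomRootPoly_eq_zero hsq hcomm
  rw [zZero_eq_sum_powerset hq hD, sum_powerset_orderedProd_eq_aeval hp1 hsq hcomm]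
  refine ⟨fun i => ?_, aeval_signPoly_sq hp hp1 hu⟩
  rw [← gammaNat_coe]
  rcases lt_or_ge i.val n with hi | hi
  · exact aeval_signPoly_anticomm_left hp hp1 hu (partialSum_mul_gammaNat hq hC hi)
  · have hi2 := i.isLt
    have h := aeval_signPoly_anticomm_right hp hp1 hu
      (gammaDual_mul_partialSum hq hC (i := 2 * n - 1 - i) (by omega))
    rwa [gammaDual, show 2 * n - 1 - (2 * n - 1 - i.val) = i.val by omega] at h

end FRT
end
end

section
/- In Cl_{2n+1}(q,c) the element z_1 = (1/c) ∑_{k=0}^n (∏_{l=1}^k (q^{2l-1}+q^{-2l+1})/(q(q+q^{-1})c²)) ∑_{J: ℓ(J)=k} q^{2L(J)-k(2n-k+1)} γ_1^{j_1}⋯γ_n^{j_n}γ_{n+1}γ_{n+2}^{j_n}⋯γ_{2n+1}^{j_1} is central (z_1 γ_i = γ_i z_1 for all i) and satisfies z_1² = 1; moreover z_1 acts by multiplication with the scalar η on the left ideal I_L^η = Cl_{2n+1}·φ^η (η = ±1). -/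
noncomputable section

namespace FRT

/-- For `m : Fin (2n+1)` with `m ≠ n` (the middle), the index `k ∈ Fin n` with
`m ∈ {k, k'}` (clamped arbitrarily at the middle, where it is unused). -/
def lowOdd (n : ℕ) (hn : 1 ≤ n) (m : Fin (2 * n + 1)) : Fin n :=
  ⟨min (min m.val (2 * n - m.val)) (n - 1), by omega⟩

/-- The monomial `γ_1^{j_1}⋯γ_n^{j_n}γ_{n+1}γ_{n+2}^{j_n}⋯γ_{2n+1}^{j_1}`. -/
def monoMid (n : ℕ) (hn : 1 ≤ n) (q c : ℂ) (J : Fin n → Bool) : Cl (2 * n + 1) q c :=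
  ((List.finRange (2 * n + 1)).map
    (fun m => if m.val = n then γ (2 * n + 1) q c m
      else if J (lowOdd n hn m) then γ (2 * n + 1) q c m else 1)).prod

/-- The element `z_1` of `Cl_{2n+1}(q,c)`. -/
def zOne (n : ℕ) (hn : 1 ≤ n) (q c : ℂ) : Cl (2 * n + 1) q c :=
  c⁻¹ • ∑ J : Fin n → Bool,
    ((∏ l ∈ Finset.range (ellJ n J),
        ((q ^ (2 * (l : ℤ) + 1) + q ^ (-(2 * (l : ℤ) + 1))) / (q * (q + q⁻¹) * c ^ 2))) *
      q ^ (2 * (LJ n J : ℤ) - (ellJ n J : ℤ) * (2 * (n : ℤ) - (ellJ n J : ℤ) + 1))) •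
    monoMid n hn q c J


section General

variable {A : Type*} [Ring A] [Algebra ℂ A]

/-- `a` and `b` commute up to the scalar `s`. -/
def QComm (s : ℂ) (a b : A) : Prop := a * b = s • (b * a)

namespace QComm

variable {s t : ℂ} {a b d : A}

theorem mul_right (h : QComm s a b) (h' : QComm t a d) : QComm (s * t) a (b * d) := by
  unfold QComm at *
  rw [← mul_assoc, h, smul_mul_assoc, mul_assoc, h', mul_smul_comm, smul_smul, mul_assoc]

theorem mul_left (h : QComm s a d) (h' : QComm t b d) : QComm (s * t) (a * b) d := by
  unfold QComm at *
  rw [mul_assoc, h', mul_smul_comm, ← mul_assoc, h, smul_mul_assoc, smul_smul, mul_assoc,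
    mul_comm t]

theorem smul_right (r : ℂ) (h : QComm s a b) : QComm s a (r • b) := by
  unfold QComm at *
  rw [mul_smul_comm, h, smul_mul_assoc, smul_comm]

theorem add_right (h : QComm s a b) (h' : QComm s a d) : QComm s a (b + d) := by
  unfold QComm at *
  rw [mul_add, h, h', add_mul, smul_add]

theorem symm (hs : s ≠ 0) (h : QComm s a b) : QComm s⁻¹ b a := by
  unfold QComm at *
  rw [h, smul_smul, inv_mul_cancel₀ hs, one_smul]

theorem commute (h : QComm s a b) (hs : s = 1) : Commute a b := by
  unfold QComm at h
  rw [hs, one_smul] at h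
  exact h

end QComm

theorem _root_.Commute.qComm {a b : A} (h : Commute a b) : QComm 1 a b := by
  unfold QComm
  rw [one_smul]
  exact h

/-- The scalar `κ_k⁻¹`, where `κ_k = q^{2n-2k}(q+q⁻¹)`. -/
def pairInv (n : ℕ) (q : ℂ) (k : ℕ) : ℂ := (q ^ (2 * (n : ℤ) - 2 * (k : ℤ)) * (q + q⁻¹))⁻¹

/-- The partial Casimir `c² + (q-q⁻¹) ∑_{i<k} q^{2i-2n+2} x_i y_i`. -/
def casimir (n : ℕ) (q c : ℂ) (x y : ℕ → A) (k : ℕ) : A :=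
  algebraMap ℂ A (c ^ 2) +
    ∑ i ∈ Finset.range k, ((q - q⁻¹) * q ^ (2 * (i : ℤ) - 2 * (n : ℤ) + 2)) • (x i * y i)

/-- The relations of `Cl_{2n+1}(q,c)` for `x_k = γ_k`, `y_k = γ_{k'}` and `w` the middle
generator. -/
structure IsSystem (n : ℕ) (q c : ℂ) (x y : ℕ → A) (w : A) : Prop where
  xsq : ∀ k < n, x k * x k = 0
  ysq : ∀ k < n, y k * y k = 0
  xx : ∀ j k, j < k → k < n → QComm (-q ^ 2) (x k) (x j)
  yy : ∀ j k, j < k → k < n → QComm (-q ^ 2) (y j) (y k)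
  yx : ∀ j k, j < n → k < n → j ≠ k → QComm (-q ^ 2) (y j) (x k)
  wx : ∀ k < n, QComm (-q ^ 2) w (x k)
  yw : ∀ k < n, QComm (-q ^ 2) (y k) w
  pair : ∀ k < n, y k * x k = -(x k * y k) + (pairInv n q k)⁻¹ • casimir n q c x y k
  wsq : w * w = casimir n q c x y n

/-- The inverse square roots of the partial Casimirs. -/
def invRoot (n : ℕ) (q c : ℂ) (x y : ℕ → A) : ℕ → A
  | 0 => algebraMap ℂ A c⁻¹
  | k + 1 => invRoot n q c x y k + ((q ^ 2)⁻¹ - 1) • (invRoot n q c x y k *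
      (pairInv n q k • (x k * y k * (invRoot n q c x y k * invRoot n q c x y k))))

/-- The idempotent attached to the pair `x_k`, `y_k`. -/
def idem (n : ℕ) (q c : ℂ) (x y : ℕ → A) (k : ℕ) : A :=
  pairInv n q k • (x k * y k * (invRoot n q c x y k * invRoot n q c x y k))

/-- The product of the reflections `1 - 2 p_k`. -/
def signProd (n : ℕ) (q c : ℂ) (x y : ℕ → A) : ℕ → A
  | 0 => 1
  | k + 1 => signProd n q c x y k * (1 - (2 : ℂ) • idem n q c x y k)

theorem invRoot_succ (n : ℕ) (q c : ℂ) (x y : ℕ → A) (k : ℕ) :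
    invRoot n q c x y (k + 1) = invRoot n q c x y k +
      ((q ^ 2)⁻¹ - 1) • (invRoot n q c x y k * idem n q c x y k) := rfl

theorem casimir_succ (n : ℕ) (q c : ℂ) (x y : ℕ → A) (k : ℕ) :
    casimir n q c x y (k + 1) = casimir n q c x y k +
      ((q - q⁻¹) * q ^ (2 * (k : ℤ) - 2 * (n : ℤ) + 2)) • (x k * y k) := by
  rw [casimir, Finset.sum_range_succ, ← add_assoc, ← casimir]

/-- An element commuting with all `x_i y_i`, `i < m`, commutes with the `m`-th inverse root. -/
theorem commute_invRoot {n : ℕ} {q c : ℂ} {x y : ℕ → A} {a : A} (m : ℕ)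
    (h : ∀ i < m, Commute a (x i * y i)) : Commute a (invRoot n q c x y m) := by
  induction m with
  | zero => exact Algebra.commute_algebraMap_right _ _
  | succ m ih =>
    have hE := ih fun i hi => h i (by omega)
    refine hE.add_right (Commute.smul_right (hE.mul_right (Commute.smul_right ?_ _)) _)
    exact (h m (by omega)).mul_right (hE.mul_right hE)

theorem commute_idem {n : ℕ} {q c : ℂ} {x y : ℕ → A} {a : A} (m : ℕ)
    (h : ∀ i ≤ m, Commute a (x i * y i)) : Commute a (idem n q c x y m) := by
  have hE : Commute a (invRoot n q c x y m) := commute_invRoot m fun i hi => h i hi.le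
  exact Commute.smul_right ((h m le_rfl).mul_right (hE.mul_right hE)) _

theorem commute_signProd {n : ℕ} {q c : ℂ} {x y : ℕ → A} {a : A} (m : ℕ)
    (h : ∀ i < m, Commute a (idem n q c x y i)) : Commute a (signProd n q c x y m) := by
  induction m with
  | zero => exact Commute.one_right a
  | succ m ih =>
    exact (ih fun i hi => h i (by omega)).mul_right
      ((Commute.one_right a).sub_right (Commute.smul_right (h m (by omega)) _))

theorem commute_casimir {n : ℕ} {q c : ℂ} {x y : ℕ → A} {a : A} (m : ℕ)
    (h : ∀ i < m, Commute a (x i * y i)) : Commute a (casimir n q c x y m) :=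
  (Algebra.commute_algebraMap_right _ _).add_right
    (Commute.sum_right _ _ _ fun i hi => Commute.smul_right (h i (Finset.mem_range.1 hi)) _)

/-- The commutation properties of the `k`-th inverse root. -/
structure RootInv (n : ℕ) (q c : ℂ) (x y : ℕ → A) (w : A) (k : ℕ) : Prop where
  commX : ∀ j, k ≤ j → j < n → Commute (invRoot n q c x y k) (x j)
  commY : ∀ j, k ≤ j → j < n → Commute (invRoot n q c x y k) (y j)
  commW : Commute (invRoot n q c x y k) w
  qX : ∀ j < k, QComm (q ^ 2) (x j) (invRoot n q c x y k)
  qY : ∀ j < k, QComm (q ^ 2) (invRoot n q c x y k) (y j)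
  inv : invRoot n q c x y k * invRoot n q c x y k * casimir n q c x y k = 1

/-- The algebra of a single pair at level `k`. -/
structure IdemRel (n : ℕ) (q c : ℂ) (x y : ℕ → A) (w : A) (k : ℕ) : Prop where
  mulX : idem n q c x y k * x k = x k
  xMul : x k * idem n q c x y k = 0
  mulY : idem n q c x y k * y k = 0
  yMul : y k * idem n q c x y k = y k
  sq : idem n q c x y k * idem n q c x y k = idem n q c x y k
  commX : ∀ j, j < n → j ≠ k → Commute (idem n q c x y k) (x j)
  commY : ∀ j, j < n → j ≠ k → Commute (idem n q c x y k) (y j)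
  commW : Commute (idem n q c x y k) w
  commE : Commute (idem n q c x y k) (invRoot n q c x y k)
  xy : x k * y k = (pairInv n q k)⁻¹ • (idem n q c x y k * casimir n q c x y k)

theorem pairInv_ne_zero {n : ℕ} {q : ℂ} (hq : q ≠ 0) (hqq : q + q⁻¹ ≠ 0) (k : ℕ) :
    pairInv n q k ≠ 0 := inv_ne_zero (mul_ne_zero (zpow_ne_zero _ hq) hqq)

namespace IsSystem

variable {n : ℕ} {q c : ℂ} {x y : ℕ → A} {w : A}

theorem commute_x_pair (S : IsSystem n q c x y w) (hq : q ≠ 0) {j k : ℕ} (hjk : k < j)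
    (hj : j < n) : Commute (x j) (x k * y k) := by
  have hs : -q ^ 2 ≠ 0 := neg_ne_zero.2 (pow_ne_zero 2 hq)
  exact ((S.xx k j hjk hj).mul_right ((S.yx k j (by omega) hj (by omega)).symm hs)).commute
    (mul_inv_cancel₀ hs)

theorem commute_y_pair (S : IsSystem n q c x y w) (hq : q ≠ 0) {j k : ℕ} (hjk : k < j)
    (hj : j < n) : Commute (y j) (x k * y k) := by
  have hs : -q ^ 2 ≠ 0 := neg_ne_zero.2 (pow_ne_zero 2 hq)
  exact ((S.yx j k hj (by omega) (by omega)).mul_right ((S.yy k j hjk hj).symm hs)).commute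
    (mul_inv_cancel₀ hs)

theorem commute_w_pair (S : IsSystem n q c x y w) (hq : q ≠ 0) {k : ℕ} (hk : k < n) :
    Commute w (x k * y k) := by
  have hs : -q ^ 2 ≠ 0 := neg_ne_zero.2 (pow_ne_zero 2 hq)
  exact ((S.wx k hk).mul_right ((S.yw k hk).symm hs)).commute (mul_inv_cancel₀ hs)

theorem idemRel (S : IsSystem n q c x y w) (hq : q ≠ 0) (hqq : q + q⁻¹ ≠ 0) {k : ℕ} (hk : k < n)
    (R : RootInv n q c x y w k) : IdemRel n q c x y w k := by
  have hs : -q ^ 2 ≠ 0 := neg_ne_zero.2 (pow_ne_zero 2 hq)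
  have hμ := pairInv_ne_zero (n := n) hq hqq k
  have hpd : idem n q c x y k =
    pairInv n q k • (x k * y k * (invRoot n q c x y k * invRoot n q c x y k)) := rfl
  have hEpair : ∀ i < k, Commute (invRoot n q c x y k) (x i * y i) := fun i hi =>
    (((R.qX i hi).symm (pow_ne_zero 2 hq)).mul_right (R.qY i hi)).commute
      (inv_mul_cancel₀ (pow_ne_zero 2 hq))
  have hEC : Commute (invRoot n q c x y k) (casimir n q c x y k) := commute_casimir k hEpair
  have hinv := R.inv
  have hEx := R.commX k le_rfl hk
  have hEy := R.commY k le_rfl hk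
  have hpair := S.pair k hk
  have hxx := S.xsq k hk
  have hyy := S.ysq k hk
  have hCy : Commute (casimir n q c x y k) (y k) :=
    (commute_casimir k fun i hi => S.commute_y_pair hq hi hk).symm
  have hxj : ∀ j, j < n → j ≠ k → Commute (idem n q c x y k) (x j) := by
    intro j hj hjk
    rcases lt_or_gt_of_ne hjk with h | h
    · have h1 : QComm _ (x j) (idem n q c x y k) :=
        ((((S.xx j k h hk).symm hs).mul_right ((S.yx k j hk hj (by omega)).symm hs)).mul_right
          ((R.qX j h).mul_right (R.qX j h))).smul_right (pairInv n q k)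
      exact (h1.commute (by field_simp)).symm
    · have hE := R.commX j h.le hj
      exact (Commute.smul_right ((S.commute_x_pair hq h hj).mul_right
        (hE.symm.mul_right hE.symm)) _).symm
  have hyj : ∀ j, j < n → j ≠ k → Commute (idem n q c x y k) (y j) := by
    intro j hj hjk
    rcases lt_or_gt_of_ne hjk with h | h
    · have h2 := (R.qY j h).symm (pow_ne_zero 2 hq)
      have h1 : QComm _ (y j) (idem n q c x y k) :=
        (((S.yx j k hj hk (by omega)).mul_right (S.yy j k h hk)).mul_right
          (h2.mul_right h2)).smul_right (pairInv n q k)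
      exact (h1.commute (by field_simp)).symm
    · have hE := R.commY j h.le hj
      exact (Commute.smul_right ((S.commute_y_pair hq h hj).mul_right
        (hE.symm.mul_right hE.symm)) _).symm
  have hw : Commute (idem n q c x y k) w :=
    (Commute.smul_right ((S.commute_w_pair hq hk).mul_right
      (R.commW.symm.mul_right R.commW.symm)) _).symm
  have hpE : Commute (idem n q c x y k) (invRoot n q c x y k) :=
    (Commute.smul_right ((hEx.mul_right hEy).mul_right
      ((Commute.refl _).mul_right (Commute.refl _))) _).symm
  suffices key : idem n q c x y k * x k = x k ∧ x k * idem n q c x y k = 0 ∧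
      idem n q c x y k * y k = 0 ∧ y k * idem n q c x y k = y k ∧
      idem n q c x y k * idem n q c x y k = idem n q c x y k ∧
      x k * y k = (pairInv n q k)⁻¹ • (idem n q c x y k * casimir n q c x y k) from
    ⟨key.1, key.2.1, key.2.2.1, key.2.2.2.1, key.2.2.2.2.1, hxj, hyj, hw, hpE, key.2.2.2.2.2⟩
  generalize invRoot n q c x y k = E at *
  generalize casimir n q c x y k = C at *
  generalize pairInv n q k = μ at *
  generalize idem n q c x y k = p at *
  generalize x k = X at *
  generalize y k = Y at *
  have hCE : C * (E * E) = 1 := by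
    rw [← (hEC.mul_left hEC).eq, hinv]
  have hpX : p * X = X := by
    have : X * Y * (E * E) * X = X * (Y * X) * (E * E) := by
      rw [mul_assoc, (hEx.mul_left hEx).eq]; noncomm_ring
    rw [hpd, smul_mul_assoc, this, hpair, mul_add, mul_neg, ← mul_assoc X X, hxx, zero_mul,
      neg_zero, zero_add, mul_smul_comm, smul_mul_assoc, smul_smul, mul_inv_cancel₀ hμ, one_smul,
      mul_assoc, hCE, mul_one]
  refine ⟨hpX, ?_, ?_, ?_, ?_, ?_⟩
  · rw [hpd, mul_smul_comm, ← mul_assoc X (X * Y), ← mul_assoc X X, hxx, zero_mul, zero_mul,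
      smul_zero]
  · rw [hpd, smul_mul_assoc, mul_assoc, (hEy.mul_left hEy).eq, ← mul_assoc, mul_assoc X, hyy,
      mul_zero, zero_mul, smul_zero]
  · rw [hpd, mul_smul_comm, ← mul_assoc Y (X * Y), ← mul_assoc Y X, hpair, add_mul, neg_mul,
      mul_assoc X, hyy, mul_zero, neg_zero, zero_add, smul_mul_assoc, smul_mul_assoc, smul_smul,
      mul_inv_cancel₀ hμ, one_smul, hCy.eq, mul_assoc, hCE, mul_one]
  · nth_rewrite 2 [hpd]
    rw [mul_smul_comm, ← mul_assoc p (X * Y), ← mul_assoc p X, hpX, ← hpd]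
  · rw [hpd, smul_mul_assoc, mul_assoc, hinv, mul_one, smul_smul, inv_mul_cancel₀ hμ, one_smul]

theorem rootInv_succ (S : IsSystem n q c x y w) (hq : q ≠ 0) (hqq : q + q⁻¹ ≠ 0) {k : ℕ}
    (hk : k < n) (R : RootInv n q c x y w k) : RootInv n q c x y w (k + 1) := by
  have I := S.idemRel hq hqq hk R
  have hq2 := pow_ne_zero 2 hq
  have hE1 : invRoot n q c x y (k + 1) = invRoot n q c x y k *
      (1 + ((q ^ 2)⁻¹ - 1) • idem n q c x y k) := by
    rw [invRoot_succ, mul_add, mul_one, mul_smul_comm]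
  refine ⟨fun j hj hjn => ?_, fun j hj hjn => ?_, ?_, fun j hj => ?_, fun j hj => ?_, ?_⟩
  · have h := R.commX j (by omega) hjn
    exact h.add_left ((h.mul_left (I.commX j hjn (by omega))).smul_left _)
  · have h := R.commY j (by omega) hjn
    exact h.add_left ((h.mul_left (I.commY j hjn (by omega))).smul_left _)
  · exact R.commW.add_left ((R.commW.mul_left I.commW).smul_left _)
  · rcases Nat.lt_succ_iff_lt_or_eq.1 hj with h | rfl
    · have h1 := R.qX j h
      have h2 := h1.mul_right (I.commX j (by omega) (by omega)).symm.qComm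
      rw [mul_one] at h2
      exact h1.add_right (h2.smul_right _)
    · have h1 := (R.commX j le_rfl hk).eq
      unfold QComm
      rw [invRoot_succ, mul_add, mul_smul_comm, ← mul_assoc, ← h1, mul_assoc, I.xMul, mul_zero,
        smul_zero, add_zero, add_mul, smul_mul_assoc, mul_assoc, I.mulX, smul_add, smul_smul,
        ← add_smul]
      rw [show q ^ 2 + q ^ 2 * ((q ^ 2)⁻¹ - 1) = 1 by field_simp; ring, one_smul]
  · rcases Nat.lt_succ_iff_lt_or_eq.1 hj with h | rfl
    · have h1 := (R.qY j h).symm hq2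
      have h2 := h1.mul_right (I.commY j (by omega) (by omega)).symm.qComm
      rw [mul_one] at h2
      have h3 := (h1.add_right (h2.smul_right ((q ^ 2)⁻¹ - 1))).symm (inv_ne_zero hq2)
      rwa [inv_inv] at h3
    · have h1 := (R.commY j le_rfl hk).eq
      unfold QComm
      rw [invRoot_succ, add_mul, smul_mul_assoc, mul_assoc, I.mulY, mul_zero,
        smul_zero, add_zero, mul_add, mul_smul_comm, ← mul_assoc, ← h1, mul_assoc, I.yMul,
        smul_add, smul_smul, ← add_smul]
      rw [show q ^ 2 + q ^ 2 * ((q ^ 2)⁻¹ - 1) = 1 by field_simp; ring, one_smul]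
  · have hC1 : casimir n q c x y (k + 1) =
        (1 + (q ^ 4 - 1) • idem n q c x y k) * casimir n q c x y k := by
      rw [casimir_succ, I.xy, add_mul, one_mul, smul_mul_assoc, smul_smul, pairInv, inv_inv]
      congr 2
      rw [show 2 * (k : ℤ) - 2 * (n : ℤ) + 2 = -(2 * (n : ℤ) - 2 * (k : ℤ)) + 2 by ring,
        zpow_add₀ hq, zpow_neg]
      have := zpow_ne_zero (2 * (n : ℤ) - 2 * (k : ℤ)) hq
      field_simp
      ring
    have hpE := I.commE
    have hpp := I.sq
    have hinv := R.inv
    rw [hE1, hC1]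
    generalize invRoot n q c x y k = E at *
    generalize casimir n q c x y k = C at *
    generalize idem n q c x y k = p at *
    have hlin : ∀ a b : ℂ, (1 + a • p) * (1 + b • p) = 1 + (a + b + a * b) • p := by
      intro a b
      simp only [add_mul, mul_add, one_mul, mul_one, smul_mul_assoc, mul_smul_comm, hpp]
      module
    have hcE : ∀ a : ℂ, (1 + a • p) * E = E * (1 + a • p) := fun a =>
      ((Commute.one_left E).add_left (hpE.smul_left a)).eq
    calc E * (1 + ((q ^ 2)⁻¹ - 1) • p) * (E * (1 + ((q ^ 2)⁻¹ - 1) • p)) *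
          ((1 + (q ^ 4 - 1) • p) * C)
        = E * ((1 + ((q ^ 2)⁻¹ - 1) • p) * E) * (1 + ((q ^ 2)⁻¹ - 1) • p) *
          (1 + (q ^ 4 - 1) • p) * C := by noncomm_ring
      _ = E * E * (((1 + ((q ^ 2)⁻¹ - 1) • p) * (1 + ((q ^ 2)⁻¹ - 1) • p)) *
          (1 + (q ^ 4 - 1) • p)) * C := by rw [hcE]; simp only [mul_assoc]
      _ = 1 := by
        rw [hlin, hlin, show ∀ r : ℂ, r = 0 → (1 + r • p) = 1 by rintro r rfl; simp, mul_one, hinv]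
        field_simp
        ring

theorem rootInv (S : IsSystem n q c x y w) (hq : q ≠ 0) (hqq : q + q⁻¹ ≠ 0) (hc : c ≠ 0) {k : ℕ}
    (hk : k ≤ n) : RootInv n q c x y w k := by
  induction k with
  | zero =>
    refine ⟨fun j _ _ => Algebra.commutes _ _, fun j _ _ => Algebra.commutes _ _,
      Algebra.commutes _ _, fun j hj => by omega, fun j hj => by omega, ?_⟩
    rw [invRoot, casimir, Finset.sum_range_zero, add_zero, ← map_mul, ← map_mul,
      show c⁻¹ * c⁻¹ * c ^ 2 = 1 by field_simp, map_one]
  | succ k ih => exact S.rootInv_succ hq hqq hk (ih (by omega))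

theorem idemRel' (S : IsSystem n q c x y w) (hq : q ≠ 0) (hqq : q + q⁻¹ ≠ 0) (hc : c ≠ 0) {k : ℕ}
    (hk : k < n) : IdemRel n q c x y w k := S.idemRel hq hqq hk (S.rootInv hq hqq hc hk.le)

theorem commute_idem_pair (S : IsSystem n q c x y w) (hq : q ≠ 0) (hqq : q + q⁻¹ ≠ 0) (hc : c ≠ 0)
    {i k : ℕ} (hi : i < n) (hk : k < n) : Commute (idem n q c x y k) (x i * y i) := by
  have I := S.idemRel' hq hqq hc hk
  by_cases h : i = k
  · subst h
    show _ * _ = _ * _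
    rw [← mul_assoc, I.mulX, mul_assoc, I.yMul]
  · exact (I.commX i hi h).mul_right (I.commY i hi h)

theorem commute_idem_idem (S : IsSystem n q c x y w) (hq : q ≠ 0) (hqq : q + q⁻¹ ≠ 0) (hc : c ≠ 0)
    {i k : ℕ} (hi : i < n) (hk : k < n) : Commute (idem n q c x y k) (idem n q c x y i) :=
  commute_idem i fun _ hj => S.commute_idem_pair hq hqq hc (by omega) hk

theorem commute_signProd_invRoot (S : IsSystem n q c x y w) (hq : q ≠ 0) (hqq : q + q⁻¹ ≠ 0)
    (hc : c ≠ 0) : Commute (signProd n q c x y n) (invRoot n q c x y n) :=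
  (commute_signProd n fun _ hi =>
    (commute_invRoot n fun _ hj => S.commute_idem_pair hq hqq hc hj hi).symm).symm

theorem commute_signProd_w (S : IsSystem n q c x y w) (hq : q ≠ 0) (hqq : q + q⁻¹ ≠ 0)
    (hc : c ≠ 0) : Commute w (signProd n q c x y n) :=
  commute_signProd n fun _ hi => (S.idemRel' hq hqq hc hi).commW.symm

theorem signProd_sq (S : IsSystem n q c x y w) (hq : q ≠ 0) (hqq : q + q⁻¹ ≠ 0) (hc : c ≠ 0)
    {m : ℕ} (hm : m ≤ n) : signProd n q c x y m * signProd n q c x y m = 1 := by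
  induction m with
  | zero => simp [signProd]
  | succ m ih =>
    have hcomm : Commute (signProd n q c x y m) (1 - (2 : ℂ) • idem n q c x y m) :=
      (Commute.one_right _).sub_right (Commute.smul_right (commute_signProd m fun i hi =>
        S.commute_idem_idem hq hqq hc (by omega) (by omega)).symm _)
    have hpp := (S.idemRel' hq hqq hc (k := m) (by omega)).sq
    rw [signProd, hcomm.symm.mul_mul_mul_comm, ih (by omega), one_mul]
    simp only [sub_mul, mul_sub, one_mul, mul_one, smul_mul_assoc, mul_smul_comm, hpp]
    module

theorem signProd_qComm {a : A} {k m : ℕ} (hkm : k < m)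
    (hk : QComm (-1) a (1 - (2 : ℂ) • idem n q c x y k))
    (h : ∀ i < m, i ≠ k → Commute (idem n q c x y i) a) :
    QComm (-1) a (signProd n q c x y m) := by
  induction m with
  | zero => omega
  | succ m ih =>
    rw [signProd]
    rcases Nat.lt_succ_iff_lt_or_eq.1 hkm with hlt | rfl
    · have h1 := ih hlt fun i hi hik => h i (by omega) hik
      have h2 : Commute a (1 - (2 : ℂ) • idem n q c x y m) :=
        (Commute.one_right _).sub_right (Commute.smul_right (h m (by omega) (by omega)).symm _)
      simpa using h1.mul_right h2.qComm
    · have h1 : Commute a (signProd n q c x y k) := commute_signProd k fun i hi =>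
        (h i (by omega) (by omega)).symm
      simpa using h1.qComm.mul_right hk

/-- The central element attached to a system. -/
def _root_.FRT.chirality (n : ℕ) (q c : ℂ) (x y : ℕ → A) (w : A) : A :=
  w * (signProd n q c x y n * invRoot n q c x y n)

theorem chirality_comm_x (S : IsSystem n q c x y w) (hq : q ≠ 0) (hqq : q + q⁻¹ ≠ 0) (hc : c ≠ 0)
    {k : ℕ} (hk : k < n) : Commute (x k) (chirality n q c x y w) := by
  have I := S.idemRel' hq hqq hc hk
  have hs : -q ^ 2 ≠ 0 := neg_ne_zero.2 (pow_ne_zero 2 hq)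
  have h2 : QComm (-1) (x k) (1 - (2 : ℂ) • idem n q c x y k) := by
    unfold QComm
    rw [mul_sub, mul_one, mul_smul_comm, I.xMul, sub_mul, one_mul, smul_mul_assoc, I.mulX]
    module
  have h1 : QComm (-1) (x k) (signProd n q c x y n) := signProd_qComm hk h2
    fun i hi hik => (S.idemRel' hq hqq hc hi).commX k hk hik.symm
  exact (((S.wx k hk).symm hs).mul_right (h1.mul_right
    ((S.rootInv hq hqq hc le_rfl).qX k hk))).commute (by field_simp)

theorem chirality_comm_y (S : IsSystem n q c x y w) (hq : q ≠ 0) (hqq : q + q⁻¹ ≠ 0) (hc : c ≠ 0)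
    {k : ℕ} (hk : k < n) : Commute (y k) (chirality n q c x y w) := by
  have I := S.idemRel' hq hqq hc hk
  have hq2 := pow_ne_zero 2 hq
  have h2 : QComm (-1) (y k) (1 - (2 : ℂ) • idem n q c x y k) := by
    unfold QComm
    rw [mul_sub, mul_one, mul_smul_comm, I.yMul, sub_mul, one_mul, smul_mul_assoc, I.mulY]
    module
  have h1 : QComm (-1) (y k) (signProd n q c x y n) := signProd_qComm hk h2
    fun i hi hik => (S.idemRel' hq hqq hc hi).commY k hk hik.symm
  exact ((S.yw k hk).mul_right (h1.mul_right
    (((S.rootInv hq hqq hc le_rfl).qY k hk).symm hq2))).commute (by field_simp)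

theorem chirality_comm_w (S : IsSystem n q c x y w) (hq : q ≠ 0) (hqq : q + q⁻¹ ≠ 0) (hc : c ≠ 0) :
    Commute w (chirality n q c x y w) :=
  (Commute.refl w).mul_right ((S.commute_signProd_w hq hqq hc).mul_right
    (S.rootInv hq hqq hc le_rfl).commW.symm)

theorem invRoot_sq_mul_wsq (S : IsSystem n q c x y w) (hq : q ≠ 0) (hqq : q + q⁻¹ ≠ 0)
    (hc : c ≠ 0) : invRoot n q c x y n * invRoot n q c x y n * (w * w) = 1 := by
  rw [S.wsq, (S.rootInv hq hqq hc le_rfl).inv]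

theorem chirality_sq (S : IsSystem n q c x y w) (hq : q ≠ 0) (hqq : q + q⁻¹ ≠ 0) (hc : c ≠ 0) :
    chirality n q c x y w * chirality n q c x y w = 1 := by
  have h1 := S.commute_signProd_w hq hqq hc
  have h2 := (S.rootInv hq hqq hc le_rfl).commW.symm
  rw [chirality, (h1.mul_right h2).symm.mul_mul_mul_comm,
    (S.commute_signProd_invRoot hq hqq hc).symm.mul_mul_mul_comm, S.signProd_sq hq hqq hc le_rfl,
    one_mul, ← S.invRoot_sq_mul_wsq hq hqq hc]
  exact ((h2.mul_left h2).mul_right (h2.mul_left h2)).eq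

/-- If all idempotents kill `Y`, the central element acts on `Y` as `c⁻¹ w`. -/
theorem chirality_mul (S : IsSystem n q c x y w) (hq : q ≠ 0) (hqq : q + q⁻¹ ≠ 0) (hc : c ≠ 0)
    {Y : A} (hY : ∀ k < n, idem n q c x y k * Y = 0) {η : ℂ} (hη : η * η = 1) :
    chirality n q c x y w * ((algebraMap ℂ A (η * c) + w) * Y) =
      η • ((algebraMap ℂ A (η * c) + w) * Y) := by
  have hE : ∀ m ≤ n, invRoot n q c x y m * Y = c⁻¹ • Y := by
    intro m hm
    induction m with
    | zero => rw [invRoot, ← Algebra.smul_def]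
    | succ m ih =>
      rw [invRoot_succ, add_mul, smul_mul_assoc, mul_assoc, hY m hm, mul_zero, smul_zero, add_zero,
        ih (by omega)]
  have hV : ∀ m ≤ n, signProd n q c x y m * Y = Y := by
    intro m hm
    induction m with
    | zero => rw [signProd, one_mul]
    | succ m ih =>
      rw [signProd, mul_assoc, sub_mul, one_mul, smul_mul_assoc, hY m hm, smul_zero, sub_zero,
        ih (by omega)]
  have hZY : chirality n q c x y w * Y = c⁻¹ • (w * Y) := by
    rw [chirality, mul_assoc, mul_assoc, hE n le_rfl, mul_smul_comm, mul_smul_comm, hV n le_rfl]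
  have hwwY : w * (w * Y) = (c ^ 2) • Y := by
    have h := S.invRoot_sq_mul_wsq hq hqq hc
    have hw := (S.rootInv hq hqq hc le_rfl).commW
    rw [((hw.mul_left hw).mul_right (hw.mul_left hw)).eq] at h
    have h3 : w * w * (invRoot n q c x y n * invRoot n q c x y n) * Y = Y := by rw [h, one_mul]
    rw [mul_assoc, mul_assoc, mul_assoc (invRoot n q c x y n), hE n le_rfl, mul_smul_comm,
      hE n le_rfl, smul_smul, mul_smul_comm, mul_smul_comm] at h3
    nth_rewrite 2 [← h3]
    rw [smul_smul, show c ^ 2 * (c⁻¹ * c⁻¹) = 1 by field_simp, one_smul]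
  have hcm : Commute (chirality n q c x y w) (algebraMap ℂ A (η * c) + w) :=
    (Algebra.commute_algebraMap_right _ _).add_right (S.chirality_comm_w hq hqq hc).symm
  rw [← mul_assoc, hcm.eq, mul_assoc, hZY, mul_smul_comm, add_mul, add_mul, hwwY,
    ← Algebra.smul_def, ← Algebra.smul_def, smul_add, smul_add, smul_smul, smul_smul, smul_smul,
    ← mul_assoc η η, hη, one_mul, add_comm, show c⁻¹ * c ^ 2 = c by field_simp,
    mul_comm η c, inv_mul_cancel_left₀ hc]

theorem invRoot_succ_pow (S : IsSystem n q c x y w) (hq : q ≠ 0) (hqq : q + q⁻¹ ≠ 0) (hc : c ≠ 0)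
    {m : ℕ} (hm : m < n) (j : ℕ) : invRoot n q c x y (m + 1) ^ j =
      invRoot n q c x y m ^ j * (1 + (((q ^ 2)⁻¹) ^ j - 1) • idem n q c x y m) := by
  have I := S.idemRel' hq hqq hc hm
  have hpp := I.sq
  have hpE := I.commE
  rw [invRoot_succ]
  generalize invRoot n q c x y m = E at *
  generalize idem n q c x y m = p at *
  induction j with
  | zero => simp
  | succ j ih =>
    have h1 : (1 + (((q ^ 2)⁻¹) ^ j - 1) • p) * E = E * (1 + (((q ^ 2)⁻¹) ^ j - 1) • p) :=
      ((Commute.one_left E).add_left (hpE.smul_left _)).eq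
    have h2 : E + ((q ^ 2)⁻¹ - 1) • (E * p) = E * (1 + ((q ^ 2)⁻¹ - 1) • p) := by
      rw [mul_add, mul_one, mul_smul_comm]
    rw [pow_succ, ih, h2, ← mul_assoc, mul_assoc (E ^ j), h1, ← mul_assoc, ← pow_succ, mul_assoc]
    congr 1
    simp only [add_mul, mul_add, one_mul, mul_one, smul_mul_assoc, mul_smul_comm, hpp]
    module

end IsSystem

/-- The ordered product `x_0^{j_0} ⋯ x_{m-1}^{j_{m-1}}`. -/
def incProd {M : Type*} [Monoid M] (x : ℕ → M) (m : ℕ) (J : Fin m → Bool) : M :=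
  (List.ofFn fun k : Fin m => if J k then x k else 1).prod

/-- The ordered product `y_{m-1}^{j_{m-1}} ⋯ y_0^{j_0}`. -/
def decProd {M : Type*} [Monoid M] (y : ℕ → M) (m : ℕ) (J : Fin m → Bool) : M :=
  (List.ofFn fun k : Fin m => if J k then y k else 1).reverse.prod

theorem incProd_snoc {M : Type*} [Monoid M] (x : ℕ → M) (m : ℕ) (J : Fin m → Bool)
    (b : Bool) :
    incProd x (m + 1) (Fin.snoc (α := fun _ => Bool) J b) =
      incProd x m J * (if b then x m else 1) := by
  rw [incProd, List.ofFn_succ']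
  simp [incProd]

theorem decProd_snoc {M : Type*} [Monoid M] (y : ℕ → M) (m : ℕ) (J : Fin m → Bool)
    (b : Bool) :
    decProd y (m + 1) (Fin.snoc (α := fun _ => Bool) J b) =
      (if b then y m else 1) * decProd y m J := by
  rw [decProd, List.ofFn_succ']
  simp [decProd]

theorem ellJ_eq_sum (m : ℕ) (J : Fin m → Bool) : ellJ m J = ∑ l : Fin m, if J l then 1 else 0 := by
  rw [ellJ, Finset.card_filter]

theorem ellJ_snoc (m : ℕ) (J : Fin m → Bool) (b : Bool) :
    ellJ (m + 1) (Fin.snoc (α := fun _ => Bool) J b) = ellJ m J + if b then 1 else 0 := by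
  rw [ellJ_eq_sum, ellJ_eq_sum, Fin.sum_univ_castSucc]
  simp

/-- The coefficients of the expansion of `V_m E_m^{2r+1}` into ordered monomials. -/
def expCoeff (n : ℕ) (q c : ℂ) (m r : ℕ) (J : Fin m → Bool) : ℂ :=
  c⁻¹ ^ (2 * (r + ellJ m J) + 1) *
    (∏ s ∈ Finset.range (ellJ m J), -(q ^ (4 * s) * (1 + (q ^ 2)⁻¹ ^ (2 * (r + s) + 1)))) *
    ∏ k : Fin m, if J k then pairInv n q k else 1

theorem expCoeff_snoc_false (n : ℕ) (q c : ℂ) (m r : ℕ) (J : Fin m → Bool) :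
    expCoeff n q c (m + 1) r (Fin.snoc (α := fun _ => Bool) J false) = expCoeff n q c m r J := by
  simp [expCoeff, ellJ_snoc, Fin.prod_univ_castSucc]

theorem expCoeff_snoc_true (n : ℕ) (q c : ℂ) (m r : ℕ) (J : Fin m → Bool) :
    expCoeff n q c (m + 1) r (Fin.snoc (α := fun _ => Bool) J true) =
      -((1 + (q ^ 2)⁻¹ ^ (2 * r + 1)) * pairInv n q m * q ^ (4 * ellJ m J)) *
        expCoeff n q c m (r + 1) J := by
  have h : ∏ s ∈ Finset.range (ellJ m J),
      -(q ^ (4 * (s + 1)) * (1 + (q ^ 2)⁻¹ ^ (2 * (r + (s + 1)) + 1))) = q ^ (4 * ellJ m J) *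
      ∏ s ∈ Finset.range (ellJ m J), -(q ^ (4 * s) * (1 + (q ^ 2)⁻¹ ^ (2 * (r + 1 + s) + 1))) := by
    rw [pow_mul q 4, ← Finset.card_range (ellJ m J), ← Finset.prod_const, Finset.card_range,
      ← Finset.prod_mul_distrib]
    refine Finset.prod_congr rfl fun s _ => ?_
    rw [show r + (s + 1) = r + 1 + s by ring]
    ring
  simp only [expCoeff, ellJ_snoc, Fin.prod_univ_castSucc, Fin.snoc_castSucc, Fin.snoc_last, if_true,
    Finset.prod_range_succ', h, Fin.val_castSucc, Fin.val_last, mul_zero, pow_zero, add_zero,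
    one_mul]
  rw [show r + (ellJ m J + 1) = r + 1 + ellJ m J by ring]
  ring

theorem sum_snoc {M : Type*} [AddCommMonoid M] (m : ℕ) (F : (Fin (m + 1) → Bool) → M) :
    ∑ J, F J = ∑ J : Fin m → Bool, F (Fin.snoc (α := fun _ => Bool) J false) +
      ∑ J : Fin m → Bool, F (Fin.snoc (α := fun _ => Bool) J true) := by
  rw [← (Fin.snocEquiv fun _ => Bool).sum_comp, Fintype.sum_prod_type, Fintype.sum_bool, add_comm]
  rfl

namespace IsSystem

variable {n : ℕ} {q c : ℂ} {x y : ℕ → A} {w : A}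

theorem decProd_qComm (S : IsSystem n q c x y w) {k m : ℕ} (hmk : m ≤ k) (hk : k < n)
    (J : Fin m → Bool) : QComm (q ^ (4 * ellJ m J)) (decProd y m J) (x k * y k) := by
  induction m with
  | zero => simp [decProd, ellJ, QComm]
  | succ m ih =>
    induction J using Fin.snocCases with
    | _ J b =>
      rw [decProd_snoc, ellJ_snoc]
      have h := ih (by omega) J
      cases b with
      | false => simpa using h
      | true =>
        have h1 := (S.yx m k (by omega) hk (by omega)).mul_right (S.yy m k (by omega) hk)
        have h2 := h1.mul_left h
        rw [show -q ^ 2 * -q ^ 2 * q ^ (4 * ellJ m J) = q ^ (4 * (ellJ m J + 1)) by ring] at h2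
        simpa using h2

theorem incProd_qComm (S : IsSystem n q c x y w) {m : ℕ} (hm : m ≤ n)
    (J : Fin m → Bool) : QComm ((-q ^ 2) ^ ellJ m J) w (incProd x m J) := by
  induction m with
  | zero => simp [incProd, ellJ, QComm]
  | succ m ih =>
    induction J using Fin.snocCases with
    | _ J b =>
      rw [incProd_snoc, ellJ_snoc]
      have h := ih (by omega) J
      cases b with
      | false => simpa using h
      | true => simpa [pow_succ] using h.mul_right (S.wx m (by omega))

/-- Expansion of `V_m E_m^{2r+1}` into ordered monomials. -/
theorem sum_expCoeff (S : IsSystem n q c x y w) (hq : q ≠ 0) (hqq : q + q⁻¹ ≠ 0) (hc : c ≠ 0)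
    {m : ℕ} (hm : m ≤ n) (r : ℕ) :
    ∑ J : Fin m → Bool, expCoeff n q c m r J • (incProd x m J * decProd y m J) =
      signProd n q c x y m * invRoot n q c x y m ^ (2 * r + 1) := by
  induction m generalizing r with
  | zero =>
    simp [expCoeff, incProd, decProd, ellJ, signProd, invRoot, Algebra.algebraMap_eq_smul_one,
      smul_pow]
  | succ m ih =>
    have hm' : m < n := hm
    have R := S.rootInv hq hqq hc hm'.le
    have I := S.idemRel' hq hqq hc hm'
    have key : ∀ J : Fin m → Bool,
        expCoeff n q c (m + 1) r (Fin.snoc (α := fun _ => Bool) J true) •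
          (incProd x m J * x m * (y m * decProd y m J)) =
        (-((1 + (q ^ 2)⁻¹ ^ (2 * r + 1)) * pairInv n q m)) •
          ((expCoeff n q c m (r + 1) J • (incProd x m J * decProd y m J)) * (x m * y m)) := by
      intro J
      have h := S.decProd_qComm le_rfl hm' J
      unfold QComm at h
      rw [expCoeff_snoc_true, smul_mul_assoc, mul_assoc (incProd x m J) (decProd y m J), h,
        mul_smul_comm, smul_smul, smul_smul, mul_assoc (incProd x m J) (x m),
        ← mul_assoc (x m) (y m)]
      congr 1
      ring
    have hxy : Commute (invRoot n q c x y m) (x m * y m) :=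
      (R.commX m le_rfl hm').mul_right (R.commY m le_rfl hm')
    rw [sum_snoc]
    simp only [incProd_snoc, decProd_snoc, if_true, key, expCoeff_snoc_false]
    simp only [Bool.false_eq_true, if_false, mul_one, one_mul]
    rw [← Finset.smul_sum, ← Finset.sum_mul, ih hm'.le, ih hm'.le,
      S.invRoot_succ_pow hq hqq hc hm', signProd]
    have hE3 : pairInv n q m • (invRoot n q c x y m ^ (2 * (r + 1) + 1) * (x m * y m)) =
        invRoot n q c x y m ^ (2 * r + 1) * idem n q c x y m := by
      rw [idem, ← ((hxy.mul_left hxy)).eq, mul_smul_comm,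
        ← mul_assoc (_ ^ _) (_ * _), ← pow_two, ← pow_add]
      rfl
    have hpE := (I.commE.pow_right (2 * r + 1)).eq
    have hpp := I.sq
    rw [neg_smul, mul_smul, mul_assoc, ← mul_smul_comm (pairInv n q m), hE3]
    have hcomm : (1 - (2 : ℂ) • idem n q c x y m) * invRoot n q c x y m ^ (2 * r + 1) =
        invRoot n q c x y m ^ (2 * r + 1) * (1 - (2 : ℂ) • idem n q c x y m) := by
      rw [sub_mul, mul_sub, one_mul, mul_one, smul_mul_assoc, mul_smul_comm, hpE]
    rw [mul_assoc, ← mul_assoc (1 - _), hcomm, mul_assoc (_ ^ _),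
      show (1 - (2 : ℂ) • idem n q c x y m) * (1 + ((q ^ 2)⁻¹ ^ (2 * r + 1) - 1) •
        idem n q c x y m) = 1 - (1 + (q ^ 2)⁻¹ ^ (2 * r + 1)) • idem n q c x y m by
        simp only [sub_mul, mul_add, one_mul, mul_one, smul_mul_assoc, mul_smul_comm, hpp]
        module]
    rw [mul_sub, mul_sub, mul_one, mul_smul_comm, mul_smul_comm, sub_eq_add_neg]

theorem chirality_eq_sum (S : IsSystem n q c x y w) (hq : q ≠ 0) (hqq : q + q⁻¹ ≠ 0) (hc : c ≠ 0) :
    chirality n q c x y w = ∑ J : Fin n → Bool, (expCoeff n q c n 0 J * (-q ^ 2) ^ ellJ n J) •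
      (incProd x n J * w * decProd y n J) := by
  have h := S.sum_expCoeff hq hqq hc le_rfl 0
  rw [mul_zero, zero_add, pow_one] at h
  rw [chirality, ← h, Finset.mul_sum]
  refine Finset.sum_congr rfl fun J _ => ?_
  have h1 := S.incProd_qComm le_rfl J
  unfold QComm at h1
  rw [mul_smul_comm, ← mul_assoc, h1, smul_mul_assoc, smul_smul]

end IsSystem

end General

theorem prod_pairInv (n : ℕ) {q : ℂ} (hq : q ≠ 0) (J : Fin n → Bool) :
    (∏ k : Fin n, if J k then pairInv n q k else 1) =
      ((q ^ (2 * (n : ℤ) + 2) * (q + q⁻¹))⁻¹) ^ ellJ n J * q ^ (2 * LJ n J) := by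
  rw [← Finset.prod_filter, ellJ, LJ, ← Finset.sum_filter, Finset.mul_sum,
    ← Finset.prod_pow_eq_pow_sum, ← Finset.prod_const, ← Finset.prod_mul_distrib]
  refine Finset.prod_congr rfl fun k _ => ?_
  rw [pairInv, show 2 * (n : ℤ) - 2 * ((k : ℕ) : ℤ) =
    2 * (n : ℤ) + 2 - ((2 * ((k : ℕ) + 1) : ℕ) : ℤ) by push_cast; ring, zpow_sub₀ hq, zpow_natCast]
  generalize q ^ (2 * ((k : ℕ) + 1)) = u
  simp only [mul_inv, inv_inv, div_eq_mul_inv]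
  ring

theorem prod_range_coeff (n : ℕ) {q c : ℂ} (hq : q ≠ 0) (hqq : q + q⁻¹ ≠ 0) (hc : c ≠ 0) (m : ℕ) :
    (∏ l ∈ Finset.range m,
        ((q ^ (2 * (l : ℤ) + 1) + q ^ (-(2 * (l : ℤ) + 1))) / (q * (q + q⁻¹) * c ^ 2))) *
      q ^ (-((m : ℤ) * (2 * (n : ℤ) - (m : ℤ) + 1))) =
    c⁻¹ ^ (2 * m) * (∏ s ∈ Finset.range m, -(q ^ (4 * s) * (1 + (q ^ 2)⁻¹ ^ (2 * s + 1)))) *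
      ((q ^ (2 * (n : ℤ) + 2) * (q + q⁻¹))⁻¹) ^ m * (-q ^ 2) ^ m := by
  induction m with
  | zero => simp
  | succ m ih =>
    have hstep : (q ^ (2 * (m : ℤ) + 1) + q ^ (-(2 * (m : ℤ) + 1))) / (q * (q + q⁻¹) * c ^ 2) *
        q ^ (-(2 * (n : ℤ) - 2 * (m : ℤ))) =
        c⁻¹ ^ 2 * -(q ^ (4 * m) * (1 + (q ^ 2)⁻¹ ^ (2 * m + 1))) *
          (q ^ (2 * (n : ℤ) + 2) * (q + q⁻¹))⁻¹ * -q ^ 2 := by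
      have h1 : q ^ (-(2 * (n : ℤ) - 2 * (m : ℤ))) = (q ^ (2 * n))⁻¹ * q ^ (2 * m) := by
        rw [← zpow_natCast, ← zpow_natCast, ← zpow_neg, ← zpow_add₀ hq]
        push_cast
        ring_nf
      have h2 : q ^ (2 * (m : ℤ) + 1) = q ^ (2 * m + 1) := by
        rw [← zpow_natCast]
        push_cast
        ring_nf
      have h3 : q ^ (2 * (n : ℤ) + 2) = q ^ (2 * n) * q ^ 2 := by
        rw [← pow_add, ← zpow_natCast]
        push_cast
        ring_nf
      rw [zpow_neg, h1, h2, h3]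
      generalize q + q⁻¹ = t at *
      rw [show q ^ (4 * m) = q ^ (2 * m) * q ^ (2 * m) by ring,
        show (q ^ 2)⁻¹ ^ (2 * m + 1) = (q ^ (2 * m + 1))⁻¹ * (q ^ (2 * m + 1))⁻¹ by
          rw [inv_pow, ← mul_inv, ← pow_mul]; ring_nf, pow_succ q (2 * m)]
      have := pow_ne_zero (2 * m) hq
      have := pow_ne_zero (2 * n) hq
      generalize q ^ (2 * m) = u at *
      generalize q ^ (2 * n) = v at *
      field_simp
    have hexp : q ^ (-(((m + 1 : ℕ) : ℤ) * (2 * (n : ℤ) - ((m + 1 : ℕ) : ℤ) + 1))) =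
        q ^ (-((m : ℤ) * (2 * (n : ℤ) - (m : ℤ) + 1))) * q ^ (-(2 * (n : ℤ) - 2 * (m : ℤ))) := by
      rw [← zpow_add₀ hq]
      push_cast
      ring_nf
    rw [Finset.prod_range_succ, Finset.prod_range_succ, hexp, mul_mul_mul_comm, ih, hstep]
    ring

theorem zOne_coeff (n : ℕ) {q c : ℂ} (hq : q ≠ 0) (hqq : q + q⁻¹ ≠ 0) (hc : c ≠ 0)
    (J : Fin n → Bool) :
    c⁻¹ * ((∏ l ∈ Finset.range (ellJ n J),
        ((q ^ (2 * (l : ℤ) + 1) + q ^ (-(2 * (l : ℤ) + 1))) / (q * (q + q⁻¹) * c ^ 2))) *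
      q ^ (2 * (LJ n J : ℤ) - (ellJ n J : ℤ) * (2 * (n : ℤ) - (ellJ n J : ℤ) + 1))) =
    expCoeff n q c n 0 J * (-q ^ 2) ^ ellJ n J := by
  rw [sub_eq_neg_add, zpow_add₀ hq, ← mul_assoc (∏ _ ∈ _, _), prod_range_coeff n hq hqq hc,
    expCoeff, prod_pairInv n hq]
  rw [show (2 : ℤ) * (LJ n J : ℤ) = ((2 * LJ n J : ℕ) : ℤ) by push_cast; rfl, zpow_natCast]
  simp only [zero_add]
  ring

theorem ofFn_two_mul_add_one {α : Type*} (n : ℕ) (F : Fin (2 * n + 1) → α) :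
    List.ofFn F = (List.ofFn fun k : Fin n => F ⟨k, by omega⟩) ++
      F ⟨n, by omega⟩ :: (List.ofFn fun k : Fin n => F ⟨2 * n - k, by omega⟩).reverse := by
  refine List.ext_getElem (by simp; omega) fun i h1 h2 => ?_
  rw [List.length_ofFn] at h1
  rw [List.getElem_ofFn]
  rcases lt_trichotomy i n with h | h | h
  · rw [List.getElem_append_left (by simpa using h), List.getElem_ofFn]
  · subst h
    rw [List.getElem_append_right (by simp)]
    simp
  · rw [List.getElem_append_right (by simp; omega), List.getElem_cons, dif_neg (by simp; omega),
      List.getElem_reverse, List.getElem_ofFn]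
    congr 1
    ext
    simp
    omega

/-- The generators `γ_1, …, γ_n` (clamped). -/
def lowGen (n : ℕ) (q c : ℂ) (k : ℕ) : Cl (2 * n + 1) q c :=
  γ (2 * n + 1) q c ⟨min k (2 * n), by omega⟩

/-- The generators `γ_{2n+1}, …, γ_{n+2}`. -/
def highGen (n : ℕ) (q c : ℂ) (k : ℕ) : Cl (2 * n + 1) q c :=
  γ (2 * n + 1) q c ⟨2 * n - k, by omega⟩

/-- The generator `γ_{n+1}`. -/
def midGen (n : ℕ) (q c : ℂ) : Cl (2 * n + 1) q c := γ (2 * n + 1) q c ⟨n, by omega⟩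

theorem γ_swap (N : ℕ) (q c : ℂ) (i j : Fin N) (hlt : i < j) (h : i.val + j.val + 1 ≠ N) :
    QComm (-q ^ 2) (γ N q c j) (γ N q c i) := by
  have := RingQuot.mkAlgHom_rel ℂ (Rel.swap (q := q) (c := c) i j hlt h)
  rw [map_mul, map_smul, map_mul] at this
  exact this

theorem γ_sq (N : ℕ) (q c : ℂ) (i : Fin N) (h : 2 * i.val + 1 ≠ N) :
    γ N q c i * γ N q c i = 0 := by
  have := RingQuot.mkAlgHom_rel ℂ (Rel.sq (q := q) (c := c) i h)
  rw [map_mul, map_zero] at this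
  exact this

theorem mk_pairSum (n : ℕ) (q c : ℂ) (k : ℕ) (hk : k < 2 * n + 1) :
    RingQuot.mkAlgHom ℂ (Rel (2 * n + 1) q c) (pairSum (2 * n + 1) q ⟨k, hk⟩) =
      ∑ i ∈ Finset.range k, q ^ (2 * (i : ℤ) - 2 * (k : ℤ) + 2) •
        (lowGen n q c i * highGen n q c i) := by
  rw [pairSum, map_sum]
  refine Finset.sum_bij (fun i _ => i.val) (fun i hi => ?_) (fun i _ j _ h => Fin.ext h)
    (fun i hi => ?_) (fun i hi => ?_)
  · exact Finset.mem_range.2 (Fin.lt_def.1 (Finset.mem_Iio.1 hi))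
  · have := Finset.mem_range.1 hi
    exact ⟨⟨i, by omega⟩, by simpa [Finset.mem_Iio] using this, rfl⟩
  · rw [map_smul, map_mul]
    have hi' : min i.val (2 * n) = i.val := by omega
    simp only [lowGen, highGen, γ, hi']
    rfl

theorem isSystem (n : ℕ) {q c : ℂ} (hq : q ≠ 0) :
    IsSystem n q c (lowGen n q c) (highGen n q c) (midGen n q c) where
  xsq k hk := γ_sq _ _ _ _ (by simp; omega)
  ysq k hk := γ_sq _ _ _ _ (by simp; omega)
  xx j k hjk hk := γ_swap _ _ _ _ _ (by simp; omega) (by simp; omega)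
  yy j k hjk hk := γ_swap _ _ _ _ _ (by simp; omega) (by simp; omega)
  yx j k hj hk hjk := γ_swap _ _ _ _ _ (by simp; omega) (by simp; omega)
  wx k hk := γ_swap _ _ _ _ _ (by simp; omega) (by simp; omega)
  yw k hk := γ_swap _ _ _ _ _ (by simp; omega) (by simp; omega)
  pair k hk := by
    have := RingQuot.mkAlgHom_rel ℂ
      (Rel.pair (N := 2 * n + 1) (q := q) (c := c) ⟨k, by omega⟩ (by simp; omega))
    rw [map_mul, map_add, map_add, map_neg, map_mul, map_smul, mk_pairSum, AlgHom.commutes] at this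
    have hk' : min k (2 * n) = k := by omega
    have hx : lowGen n q c k = RingQuot.mkAlgHom ℂ (Rel (2 * n + 1) q c) (gen ⟨k, by omega⟩) := by
      simp only [lowGen, γ, hk']
    have hy : highGen n q c k =
      RingQuot.mkAlgHom ℂ (Rel (2 * n + 1) q c) (gen (dual ⟨k, by omega⟩)) := rfl
    rw [hx, hy, this, add_assoc, pairInv, inv_inv, casimir, smul_add, Finset.smul_sum,
      Finset.smul_sum, add_comm (∑ _ ∈ _, _)]
    congr 2
    · rw [Algebra.smul_def, ← map_mul]
      refine congrArg _ ?_
      rw [show ((2 * n + 1 : ℕ) : ℤ) - 2 * (k : ℤ) - 1 = 2 * (n : ℤ) - 2 * (k : ℤ) by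
        push_cast; ring]
      ring
    · refine Finset.sum_congr rfl fun i _ => ?_
      rw [smul_smul, smul_smul]
      congr 1
      rw [show 2 * (i : ℤ) - 2 * (k : ℤ) + 2 =
        (2 * (n : ℤ) - 2 * (k : ℤ)) + (2 * (i : ℤ) - 2 * (n : ℤ) + 2) by ring, zpow_add₀ hq]
      ring
  wsq := by
    have := RingQuot.mkAlgHom_rel ℂ
      (Rel.middle (N := 2 * n + 1) (q := q) (c := c) ⟨n, by omega⟩ (by simp))
    rw [map_mul, map_add, map_smul, mk_pairSum, AlgHom.commutes, Finset.smul_sum] at this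
    simp only [smul_smul] at this
    exact this.trans (add_comm _ _)

theorem monoMid_eq (n : ℕ) (hn : 1 ≤ n) (q c : ℂ) (J : Fin n → Bool) :
    monoMid n hn q c J =
      incProd (lowGen n q c) n J * midGen n q c * decProd (highGen n q c) n J := by
  rw [monoMid, ← List.ofFn_eq_map, ofFn_two_mul_add_one, List.prod_append, List.prod_cons,
    ← mul_assoc, if_pos rfl]
  congr 2
  · congr 1
    refine congrArg _ (funext fun k => ?_)
    have h1 : lowOdd n hn ⟨k, by omega⟩ = k := Fin.ext (by simp [lowOdd]; omega)
    have h2 : min k.val (2 * n) = k.val := by omega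
    rw [if_neg (by simp; omega), h1]
    simp only [lowGen, h2]
  · congr 1
    refine congrArg _ (funext fun k => ?_)
    have h1 : lowOdd n hn ⟨2 * n - k, by omega⟩ = k := Fin.ext (by simp [lowOdd]; omega)
    rw [if_neg (by simp; omega), h1]
    rfl

theorem zOne_eq (n : ℕ) (hn : 1 ≤ n) {q c : ℂ} (hq : q ≠ 0) (hqq : q + q⁻¹ ≠ 0) (hc : c ≠ 0) :
    zOne n hn q c = chirality n q c (lowGen n q c) (highGen n q c) (midGen n q c) := by
  rw [(isSystem n hq).chirality_eq_sum hq hqq hc, zOne, Finset.smul_sum]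
  refine Finset.sum_congr rfl fun J _ => ?_
  rw [smul_smul, zOne_coeff n hq hqq hc, monoMid_eq]

theorem prodFrom_eq (n : ℕ) (q c : ℂ) :
    prodFrom (2 * n + 1) q c (n + 1) =
      (List.ofFn fun k : Fin n => highGen n q c k).reverse.prod := by
  rw [prodFrom, List.map_drop, ← List.ofFn_eq_map, ofFn_two_mul_add_one, List.drop_append,
    List.drop_of_length_le (by simp)]
  simp [highGen]

theorem idem_mul_decProd {n : ℕ} {q c : ℂ} (hq : q ≠ 0) (hqq : q + q⁻¹ ≠ 0) (hc : c ≠ 0)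
    {k m : ℕ} (hkm : k < m) (hm : m ≤ n) :
    idem n q c (lowGen n q c) (highGen n q c) k *
      (List.ofFn fun k : Fin m => highGen n q c k).reverse.prod = 0 := by
  have I := (isSystem n (c := c) hq).idemRel' hq hqq hc (show k < n by omega)
  induction m with
  | zero => omega
  | succ m ih =>
    simp only [List.ofFn_succ', List.concat_eq_append, List.reverse_append, List.reverse_singleton,
      List.singleton_append, List.prod_cons, Fin.val_last, Fin.val_castSucc]
    rcases Nat.lt_succ_iff_lt_or_eq.1 hkm with h | rfl
    · rw [← mul_assoc, (I.commY m (by omega) (by omega)).eq, mul_assoc, ih h (by omega), mul_zero]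
    · rw [← mul_assoc, I.mulY, zero_mul]

theorem add_inv_ne_zero {q : ℂ} (hq : q ≠ 0) (hqr : ∀ m : ℕ, 0 < m → q ^ m ≠ 1) :
    q + q⁻¹ ≠ 0 := by
  intro h
  have h2 : q ^ 2 = -1 := by
    have : q * (q + q⁻¹) = 0 := by rw [h, mul_zero]
    rw [mul_add, mul_inv_cancel₀ hq] at this
    linear_combination this
  exact hqr 4 (by norm_num) (by linear_combination (q ^ 2 - 1) * h2)

/-- `z_1` is central, `z_1² = 1`, and `z_1` acts by the scalar `η` on
the left ideal `Cl_{2n+1}(q,c)·φ^η`, `η = ±1`. -/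
theorem zOne_central_involution (n : ℕ) (hn : 1 ≤ n) (q c : ℂ)
    (hq : q ≠ 0) (hqr : ∀ m : ℕ, 0 < m → q ^ m ≠ 1) (hc : c ≠ 0) :
    (∀ i : Fin (2 * n + 1),
      zOne n hn q c * γ (2 * n + 1) q c i = γ (2 * n + 1) q c i * zOne n hn q c) ∧
    zOne n hn q c * zOne n hn q c = 1 ∧
    (∀ η : ℂ, η = 1 ∨ η = -1 →
      ∀ x ∈ Ideal.span {(algebraMap ℂ (Cl (2 * n + 1) q c) (η * c) +
          γ (2 * n + 1) q c ⟨n, by omega⟩) * prodFrom (2 * n + 1) q c (n + 1)},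
        zOne n hn q c * x = η • x) := by
  have hqq := add_inv_ne_zero hq hqr
  have S := isSystem n (c := c) hq
  rw [zOne_eq n hn hq hqq hc]
  have hcen : ∀ i, Commute (γ (2 * n + 1) q c i)
      (chirality n q c (lowGen n q c) (highGen n q c) (midGen n q c)) := by
    intro i
    rcases lt_trichotomy i.val n with h | h | h
    · have := S.chirality_comm_x hq hqq hc h
      have hi : min i.val (2 * n) = i.val := by omega
      simpa only [lowGen, hi] using this
    · have := S.chirality_comm_w hq hqq hc
      have hi : i = ⟨n, by omega⟩ := Fin.ext h
      rw [hi]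
      exact this
    · have := S.chirality_comm_y hq hqq hc (show 2 * n - i.val < n by omega)
      have hi : 2 * n - (2 * n - i.val) = i.val := by omega
      simpa only [highGen, hi] using this
  refine ⟨fun i => (hcen i).eq.symm, S.chirality_sq hq hqq hc, fun η hη x hx => ?_⟩
  obtain ⟨a, rfl⟩ := Ideal.mem_span_singleton'.1 hx
  have hη2 : η * η = 1 := by rcases hη with rfl | rfl <;> norm_num
  have hcomm : Commute a (chirality n q c (lowGen n q c) (highGen n q c) (midGen n q c)) := by
    obtain ⟨b, rfl⟩ := RingQuot.mkAlgHom_surjective ℂ (Rel (2 * n + 1) q c) a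
    induction b using FreeAlgebra.induction with
    | grade0 r => rw [AlgHom.commutes]; exact Algebra.commute_algebraMap_left _ _
    | grade1 i => exact hcen i
    | mul a b ha hb =>
      rw [map_mul]
      exact (ha (Ideal.mem_span_singleton'.2 ⟨_, rfl⟩)).mul_left
        (hb (Ideal.mem_span_singleton'.2 ⟨_, rfl⟩))
    | add a b ha hb =>
      rw [map_add]
      exact (ha (Ideal.mem_span_singleton'.2 ⟨_, rfl⟩)).add_left
        (hb (Ideal.mem_span_singleton'.2 ⟨_, rfl⟩))
  have key := S.chirality_mul hq hqq hc (Y := prodFrom (2 * n + 1) q c (n + 1))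
    (fun k hk => by rw [prodFrom_eq]; exact idem_mul_decProd hq hqq hc hk le_rfl) hη2
  rw [← mul_assoc, ← hcomm.eq, mul_assoc, ← mul_smul_comm]
  exact congrArg _ key

end FRT
end
end
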